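/- For every integer n ≥ 1, the theory PA⁻ + IΣn does not prove CARD(Σ_{n+1}); that is, there exists a model M of PA⁻ + IΣn and an element a ∈ M such that there is a Σ_{n+1}-definable injection from the whole of M into [0,a). -/

import Mathlib

/- Shared development: first-order arithmetic in the language {0,1,+,·,<},
   the arithmetic hierarchy, fragments of arithmetic, and coded finite
   combinatorics inside models. -/

open FirstOrder Language

namespace ArithFC

/-- Function symbols of the language of arithmetic: 0, 1, +, ·. -/
inductive Func : ℕ → Type
  | zero : Func 0
  | one : Func 0
  | add : Func 2
  | mul : Func 2

/-- Relation symbols of the language of arithmetic: <. -/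
inductive Rel : ℕ → Type
  | lt : Rel 2

/-- The first-order language {0, 1, +, ·, <}. -/
def lang : Language :=
  { Functions := Func, Relations := Rel }

section Instances

variable (M : Type) [lang.Structure M]

instance : Zero M := ⟨Structure.funMap (L := lang) Func.zero ![]⟩
instance : One M := ⟨Structure.funMap (L := lang) Func.one ![]⟩
instance : Add M := ⟨fun x y => Structure.funMap (L := lang) Func.add ![x, y]⟩
instance : Mul M := ⟨fun x y => Structure.funMap (L := lang) Func.mul ![x, y]⟩
instance : LT M := ⟨fun x y => Structure.RelMap (L := lang) Rel.lt ![x, y]⟩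
instance : LE M := ⟨fun x y => x < y ∨ x = y⟩

end Instances

/-- The numeral `n` in a model. -/
def numM (M : Type) [lang.Structure M] : ℕ → M
  | 0 => 0
  | n + 1 => numM M n + 1

/-- `b` is nonstandard (greater than every numeral). -/
def Nonstd {M : Type} [lang.Structure M] (b : M) : Prop := ∀ n : ℕ, numM M n < b

/-- The atomic formula `t < u`. -/
def ltFm {α : Type} {n : ℕ} (t u : lang.Term (α ⊕ Fin n)) : lang.BoundedFormula α n :=
  BoundedFormula.rel (Rel.lt : lang.Relations 2) ![t, u]

/-- Δ₀ formulas: built from atomic formulas by boolean connectives and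
bounded universal quantification (this generates, up to logical equivalence,
the usual class of bounded formulas). -/
inductive IsDelta0 {α : Type} : ∀ n : ℕ, lang.BoundedFormula α n → Prop
  | falsum (n : ℕ) : IsDelta0 n BoundedFormula.falsum
  | equal (n : ℕ) (t u : lang.Term (α ⊕ Fin n)) : IsDelta0 n (BoundedFormula.equal t u)
  | rel (n l : ℕ) (R : lang.Relations l) (ts : Fin l → lang.Term (α ⊕ Fin n)) :
      IsDelta0 n (BoundedFormula.rel R ts)
  | imp (n : ℕ) {φ ψ : lang.BoundedFormula α n} :
      IsDelta0 n φ → IsDelta0 n ψ → IsDelta0 n (φ.imp ψ)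
  | bdAll (n : ℕ) (t : lang.Term (α ⊕ Fin n)) {φ : lang.BoundedFormula α (n + 1)} :
      IsDelta0 (n + 1) φ →
      IsDelta0 n
        (BoundedFormula.all ((ltFm (Term.var (Sum.inr (Fin.last n))) (t.liftAt 1 n)).imp φ))

mutual
  /-- Σ_m formulas. -/
  inductive SigmaFm {α : Type} : ℕ → ∀ n : ℕ, lang.BoundedFormula α n → Prop
    | delta0 (m n : ℕ) {φ : lang.BoundedFormula α n} : IsDelta0 n φ → SigmaFm m n φ
    | ofPi (m n : ℕ) {φ : lang.BoundedFormula α n} : PiFm m n φ → SigmaFm (m + 1) n φ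
    | ex (m n : ℕ) {φ : lang.BoundedFormula α (n + 1)} :
        SigmaFm (m + 1) (n + 1) φ → SigmaFm (m + 1) n φ.ex
  /-- Π_m formulas. -/
  inductive PiFm {α : Type} : ℕ → ∀ n : ℕ, lang.BoundedFormula α n → Prop
    | delta0 (m n : ℕ) {φ : lang.BoundedFormula α n} : IsDelta0 n φ → PiFm m n φ
    | ofSigma (m n : ℕ) {φ : lang.BoundedFormula α n} : SigmaFm m n φ → PiFm (m + 1) n φ
    | all (m n : ℕ) {φ : lang.BoundedFormula α (n + 1)} :
        PiFm (m + 1) (n + 1) φ → PiFm (m + 1) n φ.all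
end

/-- A `k`-ary relation on `M` is Σ_m-definable (with parameters from `M`). -/
def IsSigmaDef (m : ℕ) (M : Type) [lang.Structure M] {k : ℕ} (R : (Fin k → M) → Prop) : Prop :=
  ∃ (p : ℕ) (φ : lang.BoundedFormula (Fin k ⊕ Fin p) 0) (w : Fin p → M),
    SigmaFm m 0 φ ∧ ∀ v : Fin k → M, R v ↔ φ.Realize (Sum.elim v w) finZeroElim

/-- A subset of `M` is Σ_m-definable with parameters. -/
def SigmaDef1 (m : ℕ) (M : Type) [lang.Structure M] (A : Set M) : Prop :=
  IsSigmaDef m M (k := 1) fun v => v 0 ∈ A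

/-- A binary relation on `M` is Σ_m-definable with parameters. -/
def SigmaDef2 (m : ℕ) (M : Type) [lang.Structure M] (R : M → M → Prop) : Prop :=
  IsSigmaDef m M (k := 2) fun v => R (v 0) (v 1)

/-- A ternary relation on `M` is Σ_m-definable with parameters. -/
def SigmaDef3 (m : ℕ) (M : Type) [lang.Structure M] (R : M → M → M → Prop) : Prop :=
  IsSigmaDef m M (k := 3) fun v => R (v 0) (v 1) (v 2)

/-- `M` is a model of PA⁻ (the nonnegative part of a discretely ordered
commutative semiring). -/
structure PAm (M : Type) [lang.Structure M] : Prop where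
  add_assoc : ∀ x y z : M, x + y + z = x + (y + z)
  add_comm : ∀ x y : M, x + y = y + x
  mul_assoc : ∀ x y z : M, x * y * z = x * (y * z)
  mul_comm : ∀ x y : M, x * y = y * x
  ldistrib : ∀ x y z : M, x * (y + z) = x * y + x * z
  add_zero : ∀ x : M, x + 0 = x
  mul_zero : ∀ x : M, x * 0 = 0
  mul_one : ∀ x : M, x * 1 = x
  lt_trans : ∀ x y z : M, x < y → y < z → x < z
  lt_irrefl : ∀ x : M, ¬x < x
  lt_total : ∀ x y : M, x < y ∨ x = y ∨ y < x
  add_lt_add : ∀ x y z : M, x < y → x + z < y + z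
  mul_lt_mul : ∀ x y z : M, x < y → 0 < z → x * z < y * z
  sub_exists : ∀ x y : M, x < y → ∃ z, x + z = y
  zero_lt_one : (0 : M) < 1
  discrete : ∀ x : M, 0 < x → (1 : M) ≤ x
  zero_le : ∀ x : M, (0 : M) ≤ x

/-- `M` satisfies the Σ_m-induction scheme (with parameters). -/
def ISig (m : ℕ) (M : Type) [lang.Structure M] : Prop :=
  ∀ A : Set M, SigmaDef1 m M A → (0 : M) ∈ A → (∀ x, x ∈ A → x + 1 ∈ A) → ∀ x, x ∈ A

/-- `M` satisfies the Σ_m-collection (bounding) scheme (with parameters). -/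
def BSig (m : ℕ) (M : Type) [lang.Structure M] : Prop :=
  ∀ R : M → M → Prop, SigmaDef2 m M R → ∀ a : M,
    (∀ x, x < a → ∃ y, R x y) → ∃ b, ∀ x, x < a → ∃ y, y < b ∧ R x y

section Coding

variable {M : Type} [lang.Structure M]

/-- `z` is the Cantor pair `⟨x, y⟩`: `2z = (x+y)(x+y+1) + 2y`. -/
def IsPairC (z x y : M) : Prop := z + z = (x + y) * (x + y + 1) + (y + y)

/-- Gödel's β-function: `x = a mod ((i+1)·b + 1)`. -/
def BetaC (a b i x : M) : Prop :=
  x < (i + 1) * b + 1 ∧ ∃ q, a = q * ((i + 1) * b + 1) + x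

/-- The sequence coded by `s` (via a Cantor pair of β-function data) has value `x`
at place `i`. -/
def SeqAt (s i x : M) : Prop := ∃ a b, IsPairC s a b ∧ BetaC a b i x

/-- `c` codes the M-finite set `X` of cardinality `card`: `c = ⟨card, s⟩` where `s`
codes the strictly increasing enumeration of `X` of length `card`. -/
def CodesFinset (c : M) (X : Set M) (card : M) : Prop :=
  ∃ s, IsPairC c card s ∧
    (∀ i, i < card → ∃ x, x ∈ X ∧ SeqAt s i x) ∧
    (∀ i j x y, i < j → j < card → SeqAt s i x → SeqAt s j y → x < y) ∧
    (∀ x, x ∈ X ↔ ∃ i, i < card ∧ SeqAt s i x)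

/-- `X` is an M-finite (coded) set. -/
def MFinite (X : Set M) : Prop := ∃ c card : M, CodesFinset c X card

/-- `d` codes an `e`-element subset `D` of `[0, y)`, i.e. an element of `[y]^e`. -/
def CodesTupleIn (d e y : M) (D : Set M) : Prop :=
  CodesFinset d D e ∧ ∀ z ∈ D, z < y

/-- `f` codes a (finite) function defined on all of `[0, a)`. -/
def CodesFunOn (f a : M) : Prop :=
  ∀ x, x < a → (∃ y, SeqAt f x y) ∧ ∀ y y', SeqAt f x y → SeqAt f x y' → y = y'

/-- `X` is an M-coded subset of `[0, a)`. -/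
def MCodedSubset (a : M) (X : Set M) : Prop :=
  MFinite X ∧ ∀ x ∈ X, x < a

end Coding

/-- An `M`-ultrafilter on `a`: an ultrafilter of the Boolean algebra of
M-finite subsets of `[0, a)`. -/
structure MUltra (M : Type) [lang.Structure M] (a : M) where
  sets : Set (Set M)
  mem_coded : ∀ X ∈ sets, MCodedSubset a X
  univ_mem : {x : M | x < a} ∈ sets
  superset_mem : ∀ X Y : Set M, X ∈ sets → MCodedSubset a Y → X ⊆ Y → Y ∈ sets
  inter_mem : ∀ X Y : Set M, X ∈ sets → Y ∈ sets → X ∩ Y ∈ sets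
  empty_not_mem : (∅ : Set M) ∉ sets
  ultra : ∀ X : Set M, MCodedSubset a X → X ∈ sets ∨ {x : M | x < a ∧ x ∉ X} ∈ sets

section Principles

variable (M : Type) [lang.Structure M]

/-- `F` is (the graph of) a Σ_m-definable injection from `[0, y)` into `[0, x)`. -/
def SigmaInjRel (m : ℕ) (F : M → M → Prop) (y x : M) : Prop :=
  SigmaDef2 m M F ∧
    (∀ u, u < y → ∃ v, v < x ∧ F u v) ∧
    (∀ u v v', u < y → F u v → F u v' → v = v') ∧
    (∀ u u' v, u < y → u' < y → F u v → F u' v → u = u')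

/-- There exists a Σ_m-definable injection from `[0, y)` into `[0, x)`. -/
def ExSigmaInj (m : ℕ) (y x : M) : Prop := ∃ F : M → M → Prop, SigmaInjRel M m F y x

/-- There exists a Σ_m-definable injection from all of `M` into `[0, a)`. -/
def SigmaInjWhole (m : ℕ) (a : M) : Prop :=
  ∃ F : M → M → Prop, SigmaDef2 m M F ∧
    (∀ u, ∃ v, v < a ∧ F u v) ∧
    (∀ u v v', F u v → F u v' → v = v') ∧
    (∀ u u' v, F u v → F u' v → u = u')

/-- CARD(Σ_m): no Σ_m-definable multivalued map sends `M` injectively below `a`. -/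
def CARD (m : ℕ) : Prop :=
  ∀ F : M → M → Prop, SigmaDef2 m M F → ∀ a : M,
    (∀ x, ∃ y, y < a ∧ F x y) →
      ∃ x0 x1 y, x0 ≠ x1 ∧ y < a ∧ F x0 y ∧ F x1 y

/-- GPHP(Σ_m): for every `x` there is `y` with no Σ_m-definable injection of
`[0,y)` into `[0,x)`. -/
def GPHP (m : ℕ) : Prop := ∀ x : M, ∃ y : M, ¬ExSigmaInj M m y x

/-- WPHP(Σ_m): for `x > 0` there is no Σ_m-definable injection of `[0,2x)` into `[0,x)`. -/
def WPHP (m : ℕ) : Prop := ∀ x : M, 0 < x → ¬ExSigmaInj M m (x + x) x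

/-- `C` is a Σ_m-definable `k`-coloring of `[y]^e` (acting on codes of
`e`-element subsets of `[0,y)`, independently of the chosen code). -/
def IsColoring (m : ℕ) (e y k : M) (C : M → M → Prop) : Prop :=
  SigmaDef2 m M C ∧
    (∀ d D, CodesTupleIn d e y D → ∃ i, i < k ∧ C d i) ∧
    (∀ d d' D i i', CodesTupleIn d e y D → CodesTupleIn d' e y D → C d i → C d' i' → i = i')

/-- FRT^e_k(Σ_m): every Σ_m-definable `k`-coloring of some `[y]^e` has an
M-finite homogeneous set of cardinality `x`, for every `x`. -/
def FRT (m : ℕ) (e k : M) : Prop :=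
  ∀ x : M, ∃ y : M, ∀ C : M → M → Prop, IsColoring M m e y k C →
    ∃ (c : M) (H : Set M), CodesFinset c H x ∧ (∀ z ∈ H, z < y) ∧
      ∃ i, ∀ d D, CodesFinset d D e → D ⊆ H → C d i

/-- fairFRT^e_k(Σ_m): the homogeneous set is required to be given as the range of a
Σ_m-definable injection from `[0,x)` into `[0,y)`. -/
def FairFRT (m : ℕ) (e k : M) : Prop :=
  ∀ x : M, ∃ y : M, ∀ C : M → M → Prop, IsColoring M m e y k C →
    ∃ H : M → M → Prop, SigmaInjRel M m H x y ∧
      ∃ i, ∀ d D, CodesFinset d D e → (∀ z ∈ D, ∃ u, u < x ∧ H u z) → C d i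

/-- `C` is a Σ_m-definable `k`-coloring of `[0, y)`. -/
def IsColoring1 (m : ℕ) (y k : M) (C : M → M → Prop) : Prop :=
  SigmaDef2 m M C ∧
    (∀ z, z < y → ∃ i, i < k ∧ C z i) ∧
    (∀ z i i', z < y → C z i → C z i' → i = i')

/-- FRT¹_k(Σ_m): every Σ_m-definable `k`-coloring of some `[0,y)` has an M-finite
homogeneous set of cardinality `x`, for every `x`. -/
def FRT1 (m : ℕ) (k : M) : Prop :=
  ∀ x : M, ∃ y : M, ∀ C : M → M → Prop, IsColoring1 M m y k C →
    ∃ (c : M) (H : Set M), CodesFinset c H x ∧ (∀ z ∈ H, z < y) ∧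
      ∃ i, ∀ z ∈ H, C z i

/-- fairFRT¹_k(Σ_m). -/
def FairFRT1 (m : ℕ) (k : M) : Prop :=
  ∀ x : M, ∃ y : M, ∀ C : M → M → Prop, IsColoring1 M m y k C →
    ∃ H : M → M → Prop, SigmaInjRel M m H x y ∧
      ∃ i, ∀ u v, u < x → H u v → C v i

end Principles

section Approx

variable {M : Type} [lang.Structure M]

/-- `f` is (the graph of) a partial function. -/
def IsPartialFun (f : M → M → Prop) : Prop := ∀ x y y', f x y → f x y' → y = y'

/-- `s` codes an approximation to the partial function `f` of length `b`. -/
def IsApprox (f : M → M → Prop) (s b : M) : Prop :=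
  (∀ i, i < b → ∃ v, SeqAt s i v) ∧
    (∀ i u v x y, i + 1 < b → SeqAt s i u → SeqAt s (i + 1) v → x ≤ u → f x y → y ≤ v)

/-- `s` codes a `g`-stretched approximation to the partial function `f` of length `b`. -/
def IsStretchedApprox (f g : M → M → Prop) (s b : M) : Prop :=
  (∀ i, i < b → ∃ v, SeqAt s i v) ∧
    (∀ i u w v x y, i + 1 < b → SeqAt s i u → g u w → SeqAt s (i + 1) v →
      x ≤ w → f x y → y ≤ v)

/-- The eventual (limit) value of `fun s => h s ·` is `x`. -/
def EvLim (h : M → M → Prop) (x : M) : Prop := ∃ s : M, ∀ t, s < t → h t x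

end Approx

/-- PΣ_m: every partial Σ_m-definable function admits approximations of every length. -/
def PSig (m : ℕ) (M : Type) [lang.Structure M] : Prop :=
  ∀ f : M → M → Prop, SigmaDef2 m M f → IsPartialFun f → ∀ b : M, ∃ s, IsApprox f s b

section Extensions

variable (M N : Type) [lang.Structure M] [lang.Structure N]

/-- `g : M → N` is Σ_m-elementary: Σ_m formulas with parameters from `M` transfer. -/
def SigmaElem (m : ℕ) (g : M → N) : Prop :=
  ∀ (p : ℕ) (φ : lang.BoundedFormula (Fin p) 0), SigmaFm m 0 φ →
    ∀ v : Fin p → M, (φ.Realize v finZeroElim ↔ φ.Realize (g ∘ v) finZeroElim)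

/-- The extension `g : M → N` is cofinal. -/
def Cofinal (g : M → N) : Prop := ∀ z : N, ∃ x : M, z ≤ g x

/-- `[0,a]^M = [0,a]^N`: every element of `N` below `g a` comes from `M`. -/
def SameBelow (g : M → N) (a : M) : Prop := ∀ z : N, z ≤ g a → ∃ x : M, g x = z

end Extensions

section Ramsey

variable {M : Type} [lang.Structure M]

/-- `f` is an M-coded `k`-coloring of `[y]^e` (assigning colors to codes of
`e`-subsets of `[0,y)`, independently of the code). -/
def CodedColoring (f e y k : M) : Prop :=
  (∀ d D, CodesTupleIn d e y D → ∃ i, i < k ∧ SeqAt f d i) ∧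
    (∀ d d' D i i', CodesTupleIn d e y D → CodesTupleIn d' e y D →
      SeqAt f d i → SeqAt f d' i' → i = i')

/-- The coded coloring `f` of `[y]^e` has an M-coded homogeneous set of cardinality `x`. -/
def CodedHomog (f e y x : M) : Prop :=
  ∃ (c : M) (H : Set M), CodesFinset c H x ∧ (∀ z ∈ H, z < y) ∧
    ∃ i, ∀ d D, CodesFinset d D e → D ⊆ H → SeqAt f d i

/-- `y = r(x, e, k)`: `y` is the least size guaranteeing coded homogeneous sets of
cardinality `x` for all coded `k`-colorings of `e`-subsets. -/
def IsRamsey (x e k y : M) : Prop :=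
  (∀ f, CodedColoring f e y k → CodedHomog f e y x) ∧
    (∀ y', y' < y → ∃ f, CodedColoring f e y' k ∧ ¬CodedHomog f e y' x)

/-- `y = r^(b)(x, e, k)`: the `b`-th iterate of the Ramsey function inside `M`. -/
def IterRamsey (x e k b y : M) : Prop :=
  ∃ s : M, SeqAt s 0 x ∧ SeqAt s b y ∧ (∀ i, i ≤ b → ∃ u, SeqAt s i u) ∧
    (∀ i u v, i < b → SeqAt s i u → SeqAt s (i + 1) v → IsRamsey u e k v)

end Ramsey

end ArithFC

namespace ArithFC

/-- The arithmetical hierarchy on predicates over primcodable types, built over primitive recursive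
predicates. -/
def SS : ℕ → (α : Type) → [Primcodable α] → (α → Prop) → Prop
  | 0, _, _, P => PrimrecPred P
  | m + 1, α, _, P => ∃ Q : α × ℕ → Prop, SS m (α × ℕ) Q ∧ ∀ x, P x ↔ ∃ y, ¬ Q (x, y)

section SSsec

variable {α β : Type} [Primcodable α] [Primcodable β]

theorem SS.of_eq {m : ℕ} {P P' : α → Prop} (h : SS m α P) (e : ∀ x, P x ↔ P' x) : SS m α P' := by
  have : P = P' := funext fun x => propext (e x)
  exact this ▸ h

theorem SS.comp {m : ℕ} : ∀ {α β : Type} [Primcodable α] [Primcodable β] {P : β → Prop} {f : α → β},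
    SS m β P → Primrec f → SS m α (fun x => P (f x)) := by
  induction m with
  | zero => intro α β _ _ P f h hf; exact PrimrecPred.comp h hf
  | succ m ih =>
    rintro α β _ _ P f ⟨Q, hQ, e⟩ hf
    refine ⟨fun p => Q (f p.1, p.2), ih hQ (f := fun p : α × ℕ => (f p.1, p.2)) ?_, fun x => e (f x)⟩
    exact Primrec.pair (hf.comp Primrec.fst) Primrec.snd

theorem SS.andor {m : ℕ} : ∀ {α : Type} [Primcodable α] {P P' : α → Prop},
    SS m α P → SS m α P' → SS m α (fun x => P x ∧ P' x) ∧ SS m α (fun x => P x ∨ P' x) := by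
  induction m with
  | zero => intro α _ P P' h h'; exact ⟨PrimrecPred.and h h', PrimrecPred.or h h'⟩
  | succ m ih =>
    rintro α _ P P' ⟨Q, hQ, e⟩ ⟨Q', hQ', e'⟩
    have h1 : SS m (α × ℕ) (fun p => Q (p.1, p.2.unpair.1)) :=
      hQ.comp (f := fun p : α × ℕ => (p.1, p.2.unpair.1))
        (Primrec.pair Primrec.fst (Primrec.fst.comp (Primrec.unpair.comp Primrec.snd)))
    have h2 : SS m (α × ℕ) (fun p => Q' (p.1, p.2.unpair.2)) :=
      hQ'.comp (f := fun p : α × ℕ => (p.1, p.2.unpair.2))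
        (Primrec.pair Primrec.fst (Primrec.snd.comp (Primrec.unpair.comp Primrec.snd)))
    refine ⟨⟨_, (ih h1 h2).2, fun x => ?_⟩, ⟨_, (ih h1 h2).1, fun x => ?_⟩⟩
    · beta_reduce
      rw [e, e']
      constructor
      · rintro ⟨⟨y, hy⟩, ⟨z, hz⟩⟩
        refine ⟨Nat.pair y z, ?_⟩
        simp [hy, hz]
      · rintro ⟨y, hy⟩
        push Not at hy
        exact ⟨⟨_, hy.1⟩, ⟨_, hy.2⟩⟩
    · beta_reduce
      rw [e, e']
      constructor
      · rintro (⟨y, hy⟩ | ⟨z, hz⟩)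
        · refine ⟨Nat.pair y 0, ?_⟩
          simp [hy]
        · refine ⟨Nat.pair 0 z, ?_⟩
          simp [hz]
      · rintro ⟨y, hy⟩
        by_cases h : Q (x, y.unpair.1)
        · exact Or.inr ⟨_, fun h' => hy ⟨h, h'⟩⟩
        · exact Or.inl ⟨_, h⟩

theorem SS.and {m : ℕ} {P P' : α → Prop} (h : SS m α P) (h' : SS m α P') :
    SS m α (fun x => P x ∧ P' x) := (SS.andor h h').1
theorem SS.or {m : ℕ} {P P' : α → Prop} (h : SS m α P) (h' : SS m α P') :
    SS m α (fun x => P x ∨ P' x) := (SS.andor h h').2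

theorem SS.not_succ {m : ℕ} {P : α → Prop} (h : SS m α P) : SS (m + 1) α (fun x => ¬ P x) :=
  ⟨fun p => P p.1, h.comp Primrec.fst, fun x => by simp⟩

theorem SS.succ {m : ℕ} : ∀ {α : Type} [Primcodable α] {P : α → Prop}, SS m α P →
    SS (m + 1) α P := by
  induction m with
  | zero =>
    intro α _ P h
    exact ⟨fun p => ¬ P p.1, (PrimrecPred.not h).comp Primrec.fst, fun x => by simp⟩
  | succ m ih =>
    rintro α _ P ⟨Q, hQ, e⟩
    exact ⟨Q, ih hQ, e⟩

theorem SS.mono {m k : ℕ} (h : m ≤ k) {P : α → Prop} (hP : SS m α P) : SS k α P := by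
  induction h with
  | refl => exact hP
  | step _ ih => exact ih.succ

theorem SS.prim {m : ℕ} {P : α → Prop} (h : PrimrecPred P) : SS m α P :=
  SS.mono (Nat.zero_le m) (show SS 0 α P from h)

theorem SS.ex {m : ℕ} {P : α × ℕ → Prop} (h : SS (m + 1) (α × ℕ) P) :
    SS (m + 1) α (fun x => ∃ y, P (x, y)) := by
  obtain ⟨Q, hQ, e⟩ := h
  refine ⟨fun p => Q ((p.1, p.2.unpair.1), p.2.unpair.2),
    hQ.comp (f := fun p : α × ℕ => ((p.1, p.2.unpair.1), p.2.unpair.2)) ?_, fun x => ?_⟩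
  · exact Primrec.pair (Primrec.pair Primrec.fst
      (Primrec.fst.comp (Primrec.unpair.comp Primrec.snd)))
        (Primrec.snd.comp (Primrec.unpair.comp Primrec.snd))
  · constructor
    · rintro ⟨y, hy⟩
      obtain ⟨z, hz⟩ := (e _).1 hy
      exact ⟨Nat.pair y z, by simpa using hz⟩
    · rintro ⟨w, hw⟩
      exact ⟨_, (e _).2 ⟨_, hw⟩⟩

theorem SS.exT {m : ℕ} [Nonempty β] {P : α × β → Prop} (h : SS (m + 1) (α × β) P) :
    SS (m + 1) α (fun x => ∃ y, P (x, y)) := by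
  obtain ⟨d⟩ := ‹Nonempty β›
  have h1 : SS (m + 1) (α × ℕ) (fun p => P (p.1, ((Encodable.decode p.2 : Option β)).getD d)) :=
    h.comp (f := fun p : α × ℕ => (p.1, ((Encodable.decode p.2 : Option β)).getD d))
      (Primrec.pair Primrec.fst (Primrec.option_getD.comp
        (Primrec.decode.comp Primrec.snd) (Primrec.const d)))
  refine h1.ex.of_eq fun x => ⟨fun ⟨y, hy⟩ => ⟨_, hy⟩, fun ⟨y, hy⟩ => ⟨Encodable.encode y, ?_⟩⟩
  simpa using hy

theorem SS.ballbex {m : ℕ} : ∀ {α : Type} [Primcodable α] {P : α × ℕ → Prop},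
    SS m (α × ℕ) P → SS m (α × ℕ) (fun p => ∀ y < p.2, P (p.1, y)) ∧
      SS m (α × ℕ) (fun p => ∃ y < p.2, P (p.1, y)) := by
  induction m with
  | zero =>
    intro α _ P h
    have hr : PrimrecRel (fun (y : ℕ) (x : α) => P (x, y)) :=
      PrimrecPred.comp h (Primrec.pair Primrec.snd Primrec.fst)
    have h1 : PrimrecPred (fun p : α × ℕ => ∀ y < p.2, P (p.1, y)) :=
      (PrimrecRel.comp hr.forall_mem_list (Primrec.list_range.comp Primrec.snd)
        Primrec.fst).of_eq fun p => by simp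
    have h2 : PrimrecPred (fun p : α × ℕ => ∃ y < p.2, P (p.1, y)) :=
      (PrimrecRel.comp hr.exists_mem_list (Primrec.list_range.comp Primrec.snd)
        Primrec.fst).of_eq fun p => by simp
    exact ⟨h1, h2⟩
  | succ m ih =>
    intro α _ P h
    constructor
    · obtain ⟨Q, hQ, e⟩ := h
      -- ∃ w, ∀ y < n, ¬ Q ((x,y), w_y)
      let g : (((α × ℕ) × ℕ) × ℕ) → (α × ℕ) × ℕ := fun p =>
        ((p.1.1.1, p.2), (((Encodable.decode p.1.2 : Option (List ℕ))).getD []).getD p.2 0)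
      have hg : Primrec g := by
        refine Primrec.pair (Primrec.pair (Primrec.fst.comp (Primrec.fst.comp Primrec.fst))
          Primrec.snd) ?_
        exact (Primrec.list_getD 0).comp (Primrec.option_getD.comp
          (Primrec.decode.comp (Primrec.snd.comp Primrec.fst)) (Primrec.const [])) Primrec.snd
      have h1 := (ih (hQ.comp hg)).2
      have h2 := h1.comp (f := fun p : (α × ℕ) × ℕ => (p, p.1.2))
        (Primrec.pair Primrec.id (Primrec.snd.comp Primrec.fst))
      refine ⟨_, h2, fun x => ?_⟩
      constructor
      · intro hx
        have : ∀ y, ∃ z, y < x.2 → ¬ Q ((x.1, y), z) := by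
          intro y
          by_cases hy : y < x.2
          · obtain ⟨z, hz⟩ := (e _).1 (hx y hy)
            exact ⟨z, fun _ => hz⟩
          · exact ⟨0, fun h => absurd h hy⟩
        choose z hz using this
        refine ⟨Encodable.encode ((List.range x.2).map z), ?_⟩
        rintro ⟨y, hy, hq⟩
        refine hz y hy ?_
        simpa [g, hy] using hq
      · rintro ⟨w, hw⟩ y hy
        exact (e _).2 ⟨_, fun hq => hw ⟨y, hy, hq⟩⟩
    · have h1 : SS (m + 1) ((α × ℕ) × ℕ) (fun p => p.2 < p.1.2 ∧ P (p.1.1, p.2)) :=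
        SS.and (SS.prim (Primrec.nat_lt.comp Primrec.snd (Primrec.snd.comp Primrec.fst)))
          (h.comp (Primrec.pair (Primrec.fst.comp Primrec.fst) Primrec.snd))
      exact h1.ex

theorem SS.ball {m : ℕ} {P : α × ℕ → Prop} (h : SS m (α × ℕ) P) :
    SS m (α × ℕ) (fun p => ∀ y < p.2, P (p.1, y)) := (SS.ballbex h).1

theorem SS.fin {m k : ℕ} {P : Fin k → α → Prop} (h : ∀ i, SS m α (P i)) :
    SS m α (fun x => ∀ i, P i x) := by
  induction k with
  | zero => exact (SS.prim (P := fun _ : α => True) (Primrec.eq.comp (Primrec.const 0) (Primrec.const 0) |>.of_eq (by simp))).of_eq (by simp)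
  | succ k ih =>
    refine ((h 0).and (ih (P := fun i => P i.succ) fun i => h _)).of_eq fun x => ?_
    rw [Fin.forall_fin_succ]

/-- Uniformization. -/
theorem SS.unif {m : ℕ} {R : α × ℕ → Prop} (h : SS (m + 1) (α × ℕ) R) :
    ∃ R' : α × ℕ → Prop, SS (m + 1) (α × ℕ) R' ∧ (∀ p, R' p → R p) ∧
      (∀ x y y', R' (x, y) → R' (x, y') → y = y') ∧ (∀ x y, R (x, y) → ∃ y', R' (x, y')) := by
  obtain ⟨Q, hQ, e⟩ := h
  let T : α × ℕ → Prop := fun p => Q ((p.1, p.2.unpair.1), p.2.unpair.2)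
  have hT : SS m (α × ℕ) T := hQ.comp
    (f := fun p : α × ℕ => ((p.1, p.2.unpair.1), p.2.unpair.2))
    (Primrec.pair (Primrec.pair Primrec.fst
      (Primrec.fst.comp (Primrec.unpair.comp Primrec.snd)))
        (Primrec.snd.comp (Primrec.unpair.comp Primrec.snd)))
  have hV : SS (m + 1) (α × ℕ) (fun p => ¬ T p ∧ ∀ w < p.2, T (p.1, w)) :=
    hT.not_succ.and hT.ball.succ
  have hW : SS (m + 1) ((α × ℕ) × ℕ) (fun p => p.2.unpair.1 = p.1.2 ∧
      (¬ T (p.1.1, p.2) ∧ ∀ w < p.2, T (p.1.1, w))) :=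
    SS.and (SS.prim (Primrec.eq.comp (Primrec.fst.comp (Primrec.unpair.comp Primrec.snd))
      (Primrec.snd.comp Primrec.fst)))
      (hV.comp (Primrec.pair (Primrec.fst.comp Primrec.fst) Primrec.snd))
  refine ⟨_, hW.ex, ?_, ?_, ?_⟩
  · rintro ⟨x, y⟩ ⟨w, hy, hw, -⟩
    dsimp only at hy hw
    subst hy
    exact (e _).2 ⟨_, hw⟩
  · rintro x y y' ⟨w, hy, hw, hm⟩ ⟨w', hy', hw', hm'⟩
    dsimp only at hy hw hm hy' hw' hm'
    rw [← hy, ← hy']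
    rcases lt_trichotomy w w' with h | h | h
    · exact absurd (hm' w h) hw
    · rw [h]
    · exact absurd (hm w' h) hw'
  · intro x y hR
    obtain ⟨z, hz⟩ := (e _).1 hR
    have hex : ∃ w, ¬ T (x, w) := ⟨Nat.pair y z, by simpa [T] using hz⟩
    classical
    refine ⟨(Nat.find hex).unpair.1, Nat.find hex, rfl, Nat.find_spec hex, fun w hw => ?_⟩
    exact not_not.1 (Nat.find_min hex hw)

/-- Universal predicates. -/
theorem SS.univ (m : ℕ) : ∃ U : ℕ × ℕ → Prop, SS (m + 1) (ℕ × ℕ) U ∧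
    ∀ P : ℕ → Prop, SS (m + 1) ℕ P → ∃ e, ∀ x, P x ↔ U (e, x) := by
  induction m with
  | zero =>
    refine ⟨fun p => ∃ k, ¬ (Nat.Partrec.Code.evaln k (Denumerable.ofNat _ p.1) p.2 = none),
      ⟨fun p => Nat.Partrec.Code.evaln p.2 (Denumerable.ofNat _ p.1.1) p.1.2 = none, ?_,
        fun x => Iff.rfl⟩, ?_⟩
    · have h0 : Primrec (fun p : (ℕ × ℕ) × ℕ =>
          ((p.2, (Denumerable.ofNat Nat.Partrec.Code p.1.1)), p.1.2)) :=
        Primrec.pair (Primrec.pair Primrec.snd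
          ((Primrec.ofNat _).comp (Primrec.fst.comp Primrec.fst))) (Primrec.snd.comp Primrec.fst)
      exact Primrec.eq.comp (Nat.Partrec.Code.primrec_evaln.comp h0) (Primrec.const none)
    · rintro P ⟨Q, ⟨hd, hQ⟩, e⟩
      have hc : Computable₂ (fun (x y : ℕ) => !decide (Q (x, y))) :=
        (Primrec.not.comp hQ).to_comp
      have hp : Partrec (fun x : ℕ => Nat.rfind fun y => Part.some (!decide (Q (x, y)))) :=
        Partrec.rfind hc.partrec₂
      obtain ⟨c, hc⟩ := Nat.Partrec.Code.exists_code.1 (Partrec.nat_iff.1 hp)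
      refine ⟨Encodable.encode c, fun x => ?_⟩
      rw [e]
      have h1 : (∃ k, ¬ (Nat.Partrec.Code.evaln k c x = none)) ↔ (c.eval x).Dom := by
        rw [Part.dom_iff_mem]
        constructor
        · rintro ⟨k, hk⟩
          obtain ⟨z, hz⟩ := Option.ne_none_iff_exists'.1 hk
          exact ⟨z, Nat.Partrec.Code.evaln_sound hz⟩
        · rintro ⟨z, hz⟩
          obtain ⟨k, hk⟩ := Nat.Partrec.Code.evaln_complete.1 hz
          exact ⟨k, by rw [hk]; simp⟩
      simp only [Denumerable.ofNat_encode]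
      rw [h1, hc]
      refine Iff.trans ?_ Nat.rfind_dom.symm
      simp
  | succ m ih =>
    obtain ⟨U, hU, hu⟩ := ih
    refine ⟨fun p => ∃ y, ¬ U (p.1, Nat.pair p.2 y),
      ⟨fun p => U (p.1.1, Nat.pair p.1.2 p.2), hU.comp ?_, fun x => Iff.rfl⟩, ?_⟩
    · exact Primrec.pair (Primrec.fst.comp Primrec.fst)
        (Primrec₂.natPair.comp (Primrec.snd.comp Primrec.fst) Primrec.snd)
    · rintro P ⟨Q, hQ, e⟩
      obtain ⟨c, hc⟩ := hu (fun x => Q x.unpair) (hQ.comp Primrec.unpair)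
      refine ⟨c, fun x => ?_⟩
      rw [e]
      refine exists_congr fun y => ?_
      simp [← hc]

end SSsec

end ArithFC
namespace ArithFC

/-- Arithmetic terms (polynomials). -/
inductive Tm (ι : Type) : Type
  | var : ι → Tm ι
  | zero : Tm ι
  | one : Tm ι
  | add : Tm ι → Tm ι → Tm ι
  | mul : Tm ι → Tm ι → Tm ι

/-- Evaluation of terms in the natural numbers. -/
def Tm.eval {ι : Type} (e : ι → ℕ) : Tm ι → ℕ
  | .var i => e i
  | .zero => 0
  | .one => 1
  | .add t u => t.eval e + u.eval e
  | .mul t u => t.eval e * u.eval e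

/-- Substitution in terms. -/
def Tm.subst {ι κ : Type} (σ : ι → Tm κ) : Tm ι → Tm κ
  | .var i => σ i
  | .zero => .zero
  | .one => .one
  | .add t u => .add (t.subst σ) (u.subst σ)
  | .mul t u => .mul (t.subst σ) (u.subst σ)

theorem Tm.eval_subst {ι κ : Type} (σ : ι → Tm κ) (e : κ → ℕ) (t : Tm ι) :
    (t.subst σ).eval e = t.eval (fun i => (σ i).eval e) := by
  induction t with
  | var i => rfl
  | zero => rfl
  | one => rfl
  | add t u h1 h2 => simp [Tm.subst, Tm.eval, h1, h2]
  | mul t u h1 h2 => simp [Tm.subst, Tm.eval, h1, h2]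

/-- Extend an environment. -/
def ext {ι : Type} (e : ι → ℕ) (x : ℕ) : Option ι → ℕ := fun o => o.elim x e

@[simp] theorem ext_none {ι : Type} (e : ι → ℕ) (x : ℕ) : ext e x none = x := rfl
@[simp] theorem ext_some {ι : Type} (e : ι → ℕ) (x : ℕ) (i : ι) : ext e x (some i) = e i := rfl

/-- Bounded arithmetical relations. -/
inductive D0 : (ι : Type) → ((ι → ℕ) → Prop) → Prop
  | fls {ι : Type} : D0 ι (fun _ => False)
  | eq {ι : Type} (t u : Tm ι) : D0 ι (fun e => t.eval e = u.eval e)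
  | lt {ι : Type} (t u : Tm ι) : D0 ι (fun e => t.eval e < u.eval e)
  | imp {ι : Type} {R R' : (ι → ℕ) → Prop} : D0 ι R → D0 ι R' → D0 ι (fun e => R e → R' e)
  | ball {ι : Type} (t : Tm ι) {R : (Option ι → ℕ) → Prop} : D0 (Option ι) R →
      D0 ι (fun e => ∀ x < t.eval e, R (ext e x))

section
variable {ι κ : Type}

theorem D0.of_eq {R R' : (ι → ℕ) → Prop} (h : D0 ι R) (e : ∀ x, R x ↔ R' x) : D0 ι R' := by
  have : R = R' := funext fun x => propext (e x)
  exact this ▸ h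

theorem D0.subst {R : (ι → ℕ) → Prop} (h : D0 ι R) : ∀ {κ : Type} (σ : ι → Tm κ),
    D0 κ (fun e => R (fun i => (σ i).eval e)) := by
  induction h with
  | fls => intro κ σ; exact D0.fls
  | eq t u => intro κ σ; exact (D0.eq (t.subst σ) (u.subst σ)).of_eq fun e => by
                simp [Tm.eval_subst]
  | lt t u => intro κ σ; exact (D0.lt (t.subst σ) (u.subst σ)).of_eq fun e => by
                simp [Tm.eval_subst]
  | imp _ _ h1 h2 => intro κ σ; exact D0.imp (h1 σ) (h2 σ)
  | @ball ι t R _ h1 =>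
    intro κ σ
    have := D0.ball (t.subst σ) (h1 (κ := Option κ) (fun o => match o with
      | none => Tm.var none
      | some i => (σ i).subst (fun j => Tm.var (some j))))
    refine this.of_eq fun e => ?_
    rw [Tm.eval_subst]
    refine forall_congr' fun x => imp_congr Iff.rfl ?_
    refine iff_of_eq (congrArg R ?_)
    funext o
    cases o with
    | none => rfl
    | some i => simp only [Tm.eval_subst, ext_some]; rfl

theorem D0.rename {R : (ι → ℕ) → Prop} (h : D0 ι R) {κ : Type} (σ : ι → κ) :
    D0 κ (fun e => R (fun i => e (σ i))) := h.subst (fun i => Tm.var (σ i))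

theorem D0.not {R : (ι → ℕ) → Prop} (h : D0 ι R) : D0 ι (fun e => ¬ R e) := D0.imp h D0.fls
theorem D0.or {R R' : (ι → ℕ) → Prop} (h : D0 ι R) (h' : D0 ι R') : D0 ι (fun e => R e ∨ R' e) :=
  (D0.imp h.not h').of_eq fun e => by tauto
theorem D0.and {R R' : (ι → ℕ) → Prop} (h : D0 ι R) (h' : D0 ι R') : D0 ι (fun e => R e ∧ R' e) :=
  (D0.imp h h'.not).not.of_eq fun e => by tauto
theorem D0.bex (t : Tm ι) {R : (Option ι → ℕ) → Prop} (h : D0 (Option ι) R) :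
    D0 ι (fun e => ∃ x < t.eval e, R (ext e x)) :=
  (D0.ball t h.not).not.of_eq fun e => by push Not; rfl

theorem D0.beta (A B I Y : Tm ι) :
    D0 ι (fun e => A.eval e % ((I.eval e + 1) * B.eval e + 1) = Y.eval e) := by
  let s : Tm ι → Tm (Option ι) := fun t => t.subst (fun j => Tm.var (some j))
  let m : Tm ι := .add (.mul (.add I .one) B) .one
  have h1 := (D0.lt Y m).and (D0.bex (.add A .one)
    (D0.eq (s A) (.add (.mul (s m) (.var none)) (s Y))))
  refine h1.of_eq fun e => ?_
  simp only [s, Tm.eval_subst, Tm.eval, m, ext_none, ext_some]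
  generalize A.eval e = a
  have hk : 0 < (I.eval e + 1) * B.eval e + 1 := Nat.succ_pos _
  generalize ((I.eval e + 1) * B.eval e + 1) = k at hk ⊢
  generalize Y.eval e = y
  constructor
  · rintro ⟨h, q, -, rfl⟩
    rw [Nat.mul_add_mod, Nat.mod_eq_of_lt h]
  · intro h
    subst h
    refine ⟨Nat.mod_lt _ hk, a / k, ?_, ?_⟩
    · exact Nat.lt_succ_of_le (Nat.div_le_self _ _)
    · exact (Nat.div_add_mod a k).symm

/-- Existential closures of bounded relations. -/
def S1 (ι : Type) (R : (ι → ℕ) → Prop) : Prop :=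
  ∃ Q, D0 (Option ι) Q ∧ ∀ e, R e ↔ ∃ y, Q (ext e y)

theorem S1.of_eq {R R' : (ι → ℕ) → Prop} (h : S1 ι R) (e : ∀ x, R x ↔ R' x) : S1 ι R' := by
  have : R = R' := funext fun x => propext (e x)
  exact this ▸ h

theorem S1.of {R : (ι → ℕ) → Prop} (h : D0 ι R) : S1 ι R :=
  ⟨_, h.rename some, fun e => by simp⟩

theorem S1.rename {R : (ι → ℕ) → Prop} (h : S1 ι R) (σ : ι → κ) :
    S1 κ (fun e => R (fun i => e (σ i))) := by
  obtain ⟨Q, hQ, e⟩ := h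
  refine ⟨_, hQ.rename (Option.map σ), fun v => ?_⟩
  beta_reduce
  rw [e]
  refine exists_congr fun y => iff_of_eq (congrArg Q ?_)
  funext o
  cases o <;> rfl

theorem S1.and {R R' : (ι → ℕ) → Prop} (h : S1 ι R) (h' : S1 ι R') :
    S1 ι (fun e => R e ∧ R' e) := by
  obtain ⟨Q, hQ, e⟩ := h
  obtain ⟨Q', hQ', e'⟩ := h'
  let σ : Option ι → Option (Option ι) := fun o => o.elim none (fun i => some (some i))
  refine ⟨_, (D0.bex (.var none) (hQ.rename σ)).and (D0.bex (.var none) (hQ'.rename σ)),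
    fun v => ?_⟩
  have key : ∀ b y, (fun i => ext (ext v b) y (σ i)) = ext v y := by
    intro b y; funext o; cases o <;> rfl
  simp only [key, Tm.eval, ext_none, e, e']
  constructor
  · rintro ⟨⟨y, hy⟩, z, hz⟩
    exact ⟨y + z + 1, ⟨y, by omega, hy⟩, ⟨z, by omega, hz⟩⟩
  · rintro ⟨b, ⟨y, -, hy⟩, ⟨z, -, hz⟩⟩
    exact ⟨⟨y, hy⟩, z, hz⟩

theorem S1.ex {R : (Option ι → ℕ) → Prop} (h : S1 (Option ι) R) :
    S1 ι (fun e => ∃ x, R (ext e x)) := by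
  obtain ⟨Q, hQ, e⟩ := h
  let σ : Option (Option ι) → Option (Option (Option ι)) := fun o =>
    match o with
    | none => none
    | some none => some none
    | some (some i) => some (some (some i))
  refine ⟨_, D0.bex (.var none) (D0.bex (.var (some none)) (hQ.rename σ)), fun v => ?_⟩
  have key : ∀ b x y, (fun i => ext (ext (ext v b) x) y (σ i)) = ext (ext v x) y := by
    intro b x y; funext o
    match o with
    | none => rfl
    | some none => rfl
    | some (some i) => rfl
  simp only [key, Tm.eval, ext_none, ext_some, e]
  constructor
  · rintro ⟨x, y, hy⟩
    exact ⟨x + y + 1, x, by omega, y, by omega, hy⟩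
  · rintro ⟨b, x, -, y, -, hy⟩
    exact ⟨x, y, hy⟩

theorem exists_bound (f : ℕ → ℕ) (n : ℕ) : ∃ b, ∀ x < n, f x < b :=
  ⟨(Finset.range n).sup f + 1, fun _ hx =>
    Nat.lt_succ_of_le (Finset.le_sup (f := f) (Finset.mem_range.2 hx))⟩

theorem S1.ball (t : Tm ι) {R : (Option ι → ℕ) → Prop} (h : S1 (Option ι) R) :
    S1 ι (fun e => ∀ x < t.eval e, R (ext e x)) := by
  obtain ⟨Q, hQ, e⟩ := h
  let σ : Option (Option ι) → Option (Option (Option ι)) := fun o =>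
    match o with
    | none => none
    | some none => some none
    | some (some i) => some (some (some i))
  refine ⟨_, D0.ball (t.subst fun i => .var (some i))
    (D0.bex (.var (some none)) (hQ.rename σ)), fun v => ?_⟩
  have key : ∀ b x y, (fun i => ext (ext (ext v b) x) y (σ i)) = ext (ext v x) y := by
    intro b x y; funext o
    match o with
    | none => rfl
    | some none => rfl
    | some (some i) => rfl
  simp only [key, Tm.eval_subst, Tm.eval, ext_none, ext_some, e]
  constructor
  · intro h
    choose! y hy using h
    obtain ⟨b, hb⟩ := exists_bound y (t.eval v)
    exact ⟨b, fun x hx => ⟨y x, hb x hx, hy x hx⟩⟩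
  · rintro ⟨b, hb⟩ x hx
    obtain ⟨y, -, hy⟩ := hb x hx
    exact ⟨y, hy⟩

theorem S1.exFin {n : ℕ} : ∀ {ι : Type} {R : (ι ⊕ Fin n → ℕ) → Prop} , S1 (ι ⊕ Fin n) R →
    S1 ι (fun e => ∃ u : Fin n → ℕ, R (Sum.elim e u)) := by
  induction n with
  | zero =>
    intro ι R h
    refine (h.rename (Sum.elim id (fun i => i.elim0))).of_eq fun e => ?_
    have : ∀ u : Fin 0 → ℕ, Sum.elim e u = fun i => e (Sum.elim id (fun i => i.elim0) i) := by
      intro u; funext i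
      rcases i with i | i
      · rfl
      · exact i.elim0
    simp [this]
  | succ n ih =>
    intro ι R h
    let σ : ι ⊕ Fin (n + 1) → Option ι ⊕ Fin n := fun i => match i with
      | .inl i => .inl (some i)
      | .inr j => Fin.cases (.inl none) (fun j => .inr j) j
    refine (ih (h.rename σ)).ex.of_eq fun e => ?_
    have key : ∀ x u, (fun i => Sum.elim (ext e x) u (σ i)) = Sum.elim e (Fin.cons x u : Fin (n + 1) → ℕ) := by
      intro x u; funext i
      rcases i with i | i
      · rfl
      · cases i using Fin.cases <;> rfl
    simp only [key]
    constructor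
    · rintro ⟨x, u, h⟩; exact ⟨_, h⟩
    · rintro ⟨u, h⟩
      refine ⟨u 0, Fin.tail u, ?_⟩
      rwa [Fin.cons_self_tail]

theorem S1.fin {n : ℕ} {R : Fin n → (ι → ℕ) → Prop} (h : ∀ i, S1 ι (R i)) :
    S1 ι (fun e => ∀ i, R i e) := by
  induction n with
  | zero => exact (S1.of (D0.fls.not)).of_eq (by simp)
  | succ k ih =>
    refine ((h 0).and (ih (R := fun i => R i.succ) fun i => h _)).of_eq fun x => ?_
    rw [Fin.forall_fin_succ]

theorem exists_beta (f : ℕ → ℕ) (n : ℕ) : ∃ a b, ∀ i < n, a % ((i + 1) * b + 1) = f i := by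
  let l := (List.range n).map f
  refine ⟨(Nat.unbeta l).unpair.1, (Nat.unbeta l).unpair.2, fun i hi => ?_⟩
  have h := Nat.beta_unbeta_coe l ⟨i, by simpa [l] using hi⟩
  simpa [Nat.beta, l] using h

/-- The graph of a vector function is S1. -/
def GS {n : ℕ} (f : List.Vector ℕ n → ℕ) : Prop :=
  S1 (Option (Fin n)) (fun e => f (List.Vector.ofFn fun i => e (some i)) = e none)

theorem GS.app {n : ℕ} {f : List.Vector ℕ n → ℕ} (h : GS f) (x : Fin n → ι) (y : ι) :
    S1 ι (fun e => f (List.Vector.ofFn fun i => e (x i)) = e y) :=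
  S1.rename h (fun o => o.elim y x)

theorem GS.of_primrec {n : ℕ} {f : List.Vector ℕ n → ℕ} (h : Nat.Primrec' f) : GS f := by
  induction h with
  | zero => exact S1.of ((D0.eq .zero (.var none)).of_eq fun e => Iff.rfl)
  | succ => exact S1.of ((D0.eq (.add (.var (some 0)) .one) (.var none)).of_eq fun e => by
      simp [Tm.eval])
  | get i => exact S1.of ((D0.eq (.var (some i)) (.var none)).of_eq fun e => by
      simp [Tm.eval])
  | @comp m n f g _ _ hf hg =>
    have h1 := S1.exFin ((S1.fin (ι := Option (Fin m) ⊕ Fin n) fun i =>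
      (hg i).app (fun j => .inl (some j)) (.inr i)).and
      (hf.app (ι := Option (Fin m) ⊕ Fin n) (fun j => .inr j) (.inl none)))
    refine h1.of_eq fun e => ?_
    simp only [Sum.elim_inl, Sum.elim_inr]
    constructor
    · rintro ⟨u, h1, h2⟩
      rw [← h2]
      congr 2
      funext i
      exact h1 i
    · intro h
      exact ⟨_, fun i => rfl, h⟩
  | @prec n f g _ _ hf hg =>
    -- variables
    let K := Option (Option (Option (Fin (n + 1))))
    have A := S1.ex (ι := K) ((S1.of (D0.beta (.var (some (some none))) (.var (some none)) .zero
      (.var none))).and (hf.app (fun j : Fin n => some (some (some (some j.succ)))) none))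
    have B := S1.ball (ι := K) (.var (some (some (some 0)))) (S1.ex (S1.ex (
      (S1.of (D0.beta (.var (some (some (some (some none))))) (.var (some (some (some none))))
        (.var (some (some none))) (.var (some none)))).and
      ((S1.of (D0.beta (.var (some (some (some (some none))))) (.var (some (some (some none))))
        (.add (.var (some (some none))) .one) (.var none))).and
      (hg.app (Fin.cases (some (some none)) (Fin.cases (some none)
        (fun j : Fin n => some (some (some (some (some (some j.succ)))))))) none)))))
    have C := S1.of (ι := K) (D0.beta (.var (some none)) (.var none) (.var (some (some (some 0))))
      (.var (some (some none))))
    refine (A.and (B.and C)).ex.ex.of_eq fun e => ?_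
    let F : ℕ → ℕ := fun k => Nat.rec (f (List.Vector.ofFn fun j : Fin n => e (some j.succ)))
      (fun y IH => g (y ::ᵥ IH ::ᵥ (List.Vector.ofFn fun j : Fin n => e (some j.succ)))) k
    have hF : (fun v : List.Vector ℕ (n + 1) =>
        (v.head.rec (f v.tail) fun y IH => g (y ::ᵥ IH ::ᵥ v.tail) : ℕ))
          (List.Vector.ofFn fun i => e (some i)) = F (e (some 0)) := by
      simp only [F, List.Vector.ofFn, List.Vector.head_cons, List.Vector.tail_cons]
    have hF0 : F 0 = f (List.Vector.ofFn fun j : Fin n => e (some j.succ)) := rfl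
    have hFs : ∀ k, F (k + 1) = g (k ::ᵥ F k ::ᵥ
      (List.Vector.ofFn fun j : Fin n => e (some j.succ))) := fun k => rfl
    rw [hF]
    clear_value F
    clear hF A B C
    simp only [Tm.eval, ext_none, ext_some, List.Vector.ofFn, Fin.cases_zero, Fin.cases_succ]
    constructor
    · rintro ⟨a, b, ⟨u, hu, hfu⟩, hB, hC⟩
      have : ∀ k ≤ e (some 0), a % ((k + 1) * b + 1) = F k := by
        intro k
        induction k with
        | zero => intro _; rw [hu, hF0, hfu]
        | succ k ih =>
          intro hk
          obtain ⟨u, w, h1, h2, h3⟩ := hB k hk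
          rw [h2, hFs, ← ih (by omega), h1, h3]
      rw [← hC, this _ le_rfl]
    · intro h
      obtain ⟨a, b, hab⟩ := exists_beta F (e (some 0) + 1)
      refine ⟨a, b, ⟨_, rfl, ?_⟩, fun k hk => ⟨_, _, rfl, rfl, ?_⟩, ?_⟩
      · rw [hab 0 (by omega), hF0]
      · rw [hab k (by omega), hab (k + 1) (by omega), hFs]
      · rw [hab _ (by omega), h]

theorem S1.of_primrecPred {k : ℕ} {P : (Fin k → ℕ) → Prop} (h : PrimrecPred P) : S1 (Fin k) P := by
  classical
  have h1 : Primrec (fun v : List.Vector ℕ k => if P v.get then 1 else 0) :=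
    Primrec.ite (PrimrecPred.comp h Primrec.vector_get') (Primrec.const 1) (Primrec.const 0)
  have h2 := GS.of_primrec (Nat.Primrec'.of_prim h1)
  have h3 := S1.ex (ι := Fin k) ((S1.of (D0.eq (.var none) .one)).and h2)
  refine h3.of_eq fun e => ?_
  have : (List.Vector.ofFn e).get = e := by funext i; simp
  simp [Tm.eval, this]

end
end ArithFC
open FirstOrder Language

namespace ArithFC

/-- The standard model. -/
@[reducible] def natStr : lang.Structure ℕ where
  funMap := fun {n} (f : Func n) => match f with
    | Func.zero => fun _ => 0
    | Func.one => fun _ => 1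
    | Func.add => fun v => v 0 + v 1
    | Func.mul => fun v => v 0 * v 1
  RelMap := fun {n} (r : Rel n) => match r with
    | Rel.lt => fun v => v 0 < v 1

/-- Value of a term in the standard model. -/
def termN {α : Type} (t : lang.Term α) (v : α → ℕ) : ℕ := @Term.realize lang ℕ natStr α v t

/-- Truth in the standard model. -/
def RealN {α : Type} {l : ℕ} (φ : lang.BoundedFormula α l) (v : α → ℕ) (xs : Fin l → ℕ) : Prop :=
  @BoundedFormula.Realize lang ℕ natStr α l φ v xs

theorem realN_falsum {α : Type} {l : ℕ} (v : α → ℕ) (xs : Fin l → ℕ) :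
    RealN (BoundedFormula.falsum) v xs ↔ False := Iff.rfl
theorem realN_equal {α : Type} {l : ℕ} (t u : lang.Term (α ⊕ Fin l)) (v : α → ℕ) (xs : Fin l → ℕ) :
    RealN (BoundedFormula.equal t u) v xs ↔
      termN t (Sum.elim v xs) = termN u (Sum.elim v xs) := Iff.rfl
theorem realN_lt {α : Type} {l : ℕ} (ts : Fin 2 → lang.Term (α ⊕ Fin l)) (v : α → ℕ)
    (xs : Fin l → ℕ) :
    RealN (BoundedFormula.rel (Rel.lt : lang.Relations 2) ts) v xs ↔
      termN (ts 0) (Sum.elim v xs) < termN (ts 1) (Sum.elim v xs) := Iff.rfl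
theorem realN_imp {α : Type} {l : ℕ} (φ ψ : lang.BoundedFormula α l) (v : α → ℕ)
    (xs : Fin l → ℕ) :
    RealN (φ.imp ψ) v xs ↔ (RealN φ v xs → RealN ψ v xs) := Iff.rfl
theorem realN_all {α : Type} {l : ℕ} (φ : lang.BoundedFormula α (l + 1)) (v : α → ℕ)
    (xs : Fin l → ℕ) :
    RealN φ.all v xs ↔ ∀ y, RealN φ v (Fin.snoc xs y) := Iff.rfl
theorem realN_ex {α : Type} {l : ℕ} (φ : lang.BoundedFormula α (l + 1)) (v : α → ℕ)
    (xs : Fin l → ℕ) :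
    RealN φ.ex v xs ↔ ∃ y, RealN φ v (Fin.snoc xs y) :=
  @BoundedFormula.realize_ex lang ℕ natStr _ _ _ _ _

theorem termN_var {α : Type} (i : α) (v : α → ℕ) : termN (Term.var i) v = v i := rfl
theorem termN_zero {α : Type} (ts : Fin 0 → lang.Term α) (v : α → ℕ) :
    termN (Term.func (Func.zero : lang.Functions 0) ts) v = 0 := rfl
theorem termN_one {α : Type} (ts : Fin 0 → lang.Term α) (v : α → ℕ) :
    termN (Term.func (Func.one : lang.Functions 0) ts) v = 1 := rfl
theorem termN_add {α : Type} (ts : Fin 2 → lang.Term α) (v : α → ℕ) :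
    termN (Term.func (Func.add : lang.Functions 2) ts) v = termN (ts 0) v + termN (ts 1) v := rfl
theorem termN_mul {α : Type} (ts : Fin 2 → lang.Term α) (v : α → ℕ) :
    termN (Term.func (Func.mul : lang.Functions 2) ts) v = termN (ts 0) v * termN (ts 1) v := rfl

/-- Realization of a lifted term, in any structure. -/
theorem realize_lift {M : Type} [lang.Structure M] {α : Type} {l : ℕ}
    (t : lang.Term (α ⊕ Fin l)) (v : α → M) (xs : Fin l → M) (y : M) :
    (t.liftAt 1 l).realize (Sum.elim v (Fin.snoc xs y : Fin (l + 1) → M))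
      = t.realize (Sum.elim v xs) := by
  rw [Term.realize_liftAt]
  congr 1
  funext s
  cases s with
  | inl a => rfl
  | inr i =>
    simp only [Function.comp, Sum.map_inr, Sum.elim_inr, i.is_lt, if_true]
    exact Fin.snoc_castSucc (α := fun _ => M) y xs i

theorem termN_lift {α : Type} {l : ℕ}
    (t : lang.Term (α ⊕ Fin l)) (v : α → ℕ) (xs : Fin l → ℕ) (y : ℕ) :
    termN (t.liftAt 1 l) (Sum.elim v (Fin.snoc xs y : Fin (l + 1) → ℕ))
      = termN t (Sum.elim v xs) := @realize_lift ℕ natStr _ _ t v xs y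

/-- A bounded universal quantifier as a formula. -/
def bdAllFm {α : Type} {l : ℕ} (t : lang.Term (α ⊕ Fin l)) (φ : lang.BoundedFormula α (l + 1)) :
    lang.BoundedFormula α l :=
  BoundedFormula.all ((ltFm (Term.var (Sum.inr (Fin.last l))) (t.liftAt 1 l)).imp φ)

theorem realN_bdAll {α : Type} {l : ℕ} (t : lang.Term (α ⊕ Fin l))
    (φ : lang.BoundedFormula α (l + 1)) (v : α → ℕ) (xs : Fin l → ℕ) :
    RealN (bdAllFm t φ) v xs ↔ ∀ y < termN t (Sum.elim v xs), RealN φ v (Fin.snoc xs y) := by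
  refine forall_congr' fun y => ?_
  refine imp_congr ?_ Iff.rfl
  refine (realN_lt _ v _).trans ?_
  simp only [Matrix.cons_val_zero, Matrix.cons_val_one, termN_lift, termN_var, Sum.elim_inr,
    Fin.snoc_last]

/-- Translating terms. -/
def Tm.toT {ι β : Type} (ρ : ι → β) : Tm ι → lang.Term β
  | .var i => Term.var (ρ i)
  | .zero => Term.func (Func.zero : lang.Functions 0) ![]
  | .one => Term.func (Func.one : lang.Functions 0) ![]
  | .add t u => Term.func (Func.add : lang.Functions 2) ![t.toT ρ, u.toT ρ]
  | .mul t u => Term.func (Func.mul : lang.Functions 2) ![t.toT ρ, u.toT ρ]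

theorem Tm.termN_toT {ι β : Type} (ρ : ι → β) (v : β → ℕ) (t : Tm ι) :
    termN (t.toT ρ) v = t.eval (v ∘ ρ) := by
  induction t with
  | var i => rfl
  | zero => rfl
  | one => rfl
  | add t u h1 h2 => simp only [Tm.toT, Tm.eval, termN_add, ← h1, ← h2]; rfl
  | mul t u h1 h2 => simp only [Tm.toT, Tm.eval, termN_mul, ← h1, ← h2]; rfl

theorem D0.toFm {ι : Type} {R : (ι → ℕ) → Prop} (h : D0 ι R) : ∀ {α : Type} {l : ℕ}
    (ρ : ι → α ⊕ Fin l), ∃ φ : lang.BoundedFormula α l, IsDelta0 l φ ∧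
      ∀ v xs, RealN φ v xs ↔ R (Sum.elim v xs ∘ ρ) := by
  induction h with
  | fls => intro α l ρ; exact ⟨_, IsDelta0.falsum l, fun v xs => Iff.rfl⟩
  | eq t u =>
    intro α l ρ
    refine ⟨_, IsDelta0.equal l (t.toT ρ) (u.toT ρ), fun v xs => ?_⟩
    rw [realN_equal, Tm.termN_toT, Tm.termN_toT]
  | lt t u =>
    intro α l ρ
    refine ⟨_, IsDelta0.rel l 2 (Rel.lt : lang.Relations 2) ![t.toT ρ, u.toT ρ], fun v xs => ?_⟩
    refine (realN_lt _ _ _).trans ?_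
    have h1 := Tm.termN_toT ρ (Sum.elim v xs) t
    have h2 := Tm.termN_toT ρ (Sum.elim v xs) u
    show termN (t.toT ρ) _ < termN (u.toT ρ) _ ↔ t.eval _ < u.eval _
    rw [h1, h2]
  | imp _ _ h1 h2 =>
    intro α l ρ
    obtain ⟨φ, hφ, e⟩ := h1 ρ
    obtain ⟨ψ, hψ, e'⟩ := h2 ρ
    exact ⟨_, IsDelta0.imp l hφ hψ, fun v xs => by rw [realN_imp, e, e']⟩
  | @ball ι t R _ h1 =>
    intro α l ρ
    let ρ' : Option ι → α ⊕ Fin (l + 1) := fun o => match o with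
      | none => Sum.inr (Fin.last l)
      | some i => Sum.map id Fin.castSucc (ρ i)
    obtain ⟨φ, hφ, e⟩ := h1 ρ'
    refine ⟨bdAllFm (t.toT ρ) φ, IsDelta0.bdAll l _ hφ, fun v xs => ?_⟩
    rw [realN_bdAll, Tm.termN_toT]
    refine forall_congr' fun y => imp_congr Iff.rfl ?_
    rw [e]
    refine iff_of_eq (congrArg R ?_)
    funext o
    cases o with
    | none => simp [ρ']
    | some i =>
      simp only [Function.comp, ρ', ext_some]
      cases ρ i with
      | inl a => rfl
      | inr j => simp

theorem primrec_pi {γ : Type} [Primcodable γ] {n : ℕ} {f : γ → Fin n → ℕ}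
    (h : ∀ i, Primrec (fun a => f a i)) : Primrec f :=
  (Primrec.vector_get'.comp (Primrec.vector_ofFn h)).of_eq fun a => by funext i; simp

theorem SS.toFm {m : ℕ} : ∀ {k : ℕ} {P : (Fin k → ℕ) → Prop}, SS (m + 1) (Fin k → ℕ) P →
    ∀ {α : Type} {l : ℕ} (ρ : Fin k → α ⊕ Fin l),
      (∃ σ : lang.BoundedFormula α l, SigmaFm (m + 1) l σ ∧
        ∀ v xs, RealN σ v xs ↔ P (Sum.elim v xs ∘ ρ)) ∧
      (∃ π : lang.BoundedFormula α l, PiFm (m + 1) l π ∧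
        ∀ v xs, RealN π v xs ↔ ¬ P (Sum.elim v xs ∘ ρ)) := by
  have hpr : ∀ k, Primrec (fun v : Fin (k + 1) → ℕ => ((Fin.init v : Fin k → ℕ), v (Fin.last k))) := by
    intro k
    refine Primrec.pair ?_ ?_
    · exact primrec_pi fun i => Primrec.fin_app.comp Primrec.id (Primrec.const i.castSucc)
    · exact Primrec.fin_app.comp Primrec.id (Primrec.const _)
  induction m with
  | zero =>
    rintro k P ⟨Q, hQ, e⟩ α l ρ
    have h1 : PrimrecPred (fun v : Fin (k + 1) → ℕ => ¬ Q (Fin.init v, v (Fin.last k))) :=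
      PrimrecPred.not (PrimrecPred.comp hQ (hpr k))
    obtain ⟨D, hD, e'⟩ := S1.of_primrecPred h1
    let ρ' : Option (Fin (k + 1)) → α ⊕ Fin (l + 2) := fun o => match o with
      | none => Sum.inr (Fin.last _)
      | some i => Fin.lastCases (motive := fun _ => α ⊕ Fin (l + 2)) (Sum.inr (Fin.last l).castSucc)
          (fun j => Sum.map id (fun s => s.castSucc.castSucc) (ρ j)) i
    obtain ⟨φ, hφ, e''⟩ := hD.toFm ρ'
    have key : ∀ (v : α → ℕ) (xs : Fin l → ℕ) (y z : ℕ),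
        RealN φ v (Fin.snoc (Fin.snoc xs y : Fin (l + 1) → ℕ) z : Fin (l + 2) → ℕ) ↔
          D (ext (Fin.snoc (Sum.elim v xs ∘ ρ) y : Fin (k + 1) → ℕ) z) := by
      intro v xs y z
      rw [e'']
      refine iff_of_eq (congrArg D ?_)
      funext o
      cases o with
      | none => simp [ρ']
      | some i =>
        simp only [Function.comp, ρ', ext_some]
        refine Fin.lastCases ?_ (fun j => ?_) i
        · simp
        · simp only [Fin.lastCases_castSucc, Fin.snoc_castSucc]
          simp only [Function.comp]
          cases ρ j with
          | inl a => rfl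
          | inr j => simp
    have key2 : ∀ (v : α → ℕ) (xs : Fin l → ℕ), P (Sum.elim v xs ∘ ρ) ↔ ∃ y z,
        RealN φ v (Fin.snoc (Fin.snoc xs y : Fin (l + 1) → ℕ) z : Fin (l + 2) → ℕ) := by
      intro v xs
      rw [e]
      refine exists_congr fun y => ?_
      have := e' (Fin.snoc (Sum.elim v xs ∘ ρ) y : Fin (k + 1) → ℕ)
      simp only [Fin.init_snoc, Fin.snoc_last] at this
      rw [this]
      exact exists_congr fun z => (key v xs y z).symm
    refine ⟨⟨φ.ex.ex, ?_, fun v xs => ?_⟩, ⟨(φ.imp BoundedFormula.falsum).all.all, ?_, fun v xs => ?_⟩⟩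
    · exact SigmaFm.ex _ _ (SigmaFm.ex _ _ (SigmaFm.delta0 _ _ hφ))
    · rw [key2, realN_ex]
      exact exists_congr fun y => realN_ex _ _ _
    · exact PiFm.all _ _ (PiFm.all _ _ (PiFm.delta0 _ _ (IsDelta0.imp _ hφ (IsDelta0.falsum _))))
    · rw [key2]
      push Not
      rfl
  | succ m ih =>
    rintro k P ⟨Q, hQ, e⟩ α l ρ
    have h1 : SS (m + 1) (Fin (k + 1) → ℕ) (fun v => Q (Fin.init v, v (Fin.last k))) :=
      hQ.comp (hpr k)
    let ρ' : Fin (k + 1) → α ⊕ Fin (l + 1) := 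
      Fin.lastCases (motive := fun _ => α ⊕ Fin (l + 1)) (Sum.inr (Fin.last l))
          (fun j => Sum.map id (fun s => s.castSucc) (ρ j))
    have key : ∀ (v : α → ℕ) (xs : Fin l → ℕ) (y : ℕ),
        (Sum.elim v (Fin.snoc xs y : Fin (l + 1) → ℕ) ∘ ρ') = Fin.snoc (Sum.elim v xs ∘ ρ) y := by
      intro v xs y
      funext i
      refine Fin.lastCases ?_ (fun j => ?_) i
      · simp [ρ']
      · simp only [Function.comp, ρ', Fin.lastCases_castSucc, Fin.snoc_castSucc]
        cases ρ j with
        | inl a => rfl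
        | inr j => simp
    obtain ⟨⟨σ, hσ, es⟩, ⟨π, hπ, ep⟩⟩ := ih h1 ρ'
    refine ⟨⟨π.ex, SigmaFm.ex _ _ (SigmaFm.ofPi _ _ hπ), fun v xs => ?_⟩,
      ⟨σ.all, PiFm.all _ _ (PiFm.ofSigma _ _ hσ), fun v xs => ?_⟩⟩
    · rw [realN_ex, e]
      simp only [ep, key, Fin.init_snoc, Fin.snoc_last]
    · rw [realN_all, e]
      push Not
      simp only [es, key, Fin.init_snoc, Fin.snoc_last]

theorem prim_term {α γ : Type} [Primcodable γ] (t : lang.Term α) (v : γ → α → ℕ)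
    (hv : ∀ a, Primrec (fun c => v c a)) : Primrec (fun c => termN t (v c)) := by
  induction t with
  | var i => exact hv i
  | func f ts ih =>
    cases f with
    | zero => exact Primrec.const 0
    | one => exact Primrec.const 1
    | add => exact Primrec.nat_add.comp (ih 0) (ih 1)
    | mul => exact Primrec.nat_mul.comp (ih 0) (ih 1)

theorem prim_elim {α γ : Type} [Primcodable γ] {l : ℕ} {v : γ → α → ℕ} {xs : γ → Fin l → ℕ}
    (hv : ∀ a, Primrec (fun c => v c a)) (hx : ∀ i, Primrec (fun c => xs c i)) :
    ∀ s, Primrec (fun c => (Sum.elim (v c) (xs c) : α ⊕ Fin l → ℕ) s)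
  | Sum.inl a => hv a
  | Sum.inr i => hx i

theorem prim_snoc {γ : Type} [Primcodable γ] {l : ℕ} {xs : γ → Fin l → ℕ}
    (hx : ∀ i, Primrec (fun c => xs c i)) (i : Fin (l + 1)) :
    Primrec (fun p : γ × ℕ => (Fin.snoc (xs p.1) p.2 : Fin (l + 1) → ℕ) i) := by
  refine Fin.lastCases ?_ (fun j => ?_) i
  · simpa using Primrec.snd
  · simpa using (hx j).comp Primrec.fst

theorem IsDelta0.prim {α : Type} {l : ℕ} {φ : lang.BoundedFormula α l} (h : IsDelta0 l φ) :
    ∀ {γ : Type} [Primcodable γ] (v : γ → α → ℕ) (xs : γ → Fin l → ℕ),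
      (∀ a, Primrec (fun c => v c a)) → (∀ i, Primrec (fun c => xs c i)) →
      PrimrecPred (fun c => RealN φ (v c) (xs c)) := by
  induction h with
  | falsum l =>
    intro γ _ v xs hv hx
    exact PrimrecPred.of_eq (p := fun _ : γ => (0 : ℕ) = 1)
      (Primrec.eq.comp (Primrec.const 0) (Primrec.const 1)) fun c => by simp [realN_falsum]
  | equal l t u =>
    intro γ _ v xs hv hx
    exact Primrec.eq.comp (prim_term t _ (prim_elim hv hx)) (prim_term u _ (prim_elim hv hx))
  | rel l k R ts =>
    intro γ _ v xs hv hx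
    cases R
    exact Primrec.nat_lt.comp (prim_term _ _ (prim_elim hv hx)) (prim_term _ _ (prim_elim hv hx))
  | imp l _ _ h1 h2 =>
    intro γ _ v xs hv hx
    refine ((h1 v xs hv hx).not.or (h2 v xs hv hx)).of_eq fun c => ?_
    rw [realN_imp]
    tauto
  | @bdAll l t φ _ h1 =>
    intro γ _ v xs hv hx
    have h2 := h1 (γ := γ × ℕ) (fun p => v p.1) (fun p => Fin.snoc (xs p.1) p.2)
      (fun a => (hv a).comp Primrec.fst) (prim_snoc hx)
    have h3 := SS.ball (m := 0) h2
    have h4 := SS.comp h3 (Primrec.pair Primrec.id (prim_term t _ (prim_elim hv hx)))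
    exact PrimrecPred.of_eq h4 fun c => (realN_bdAll t φ (v c) (xs c)).symm

theorem sigmaPi_SS {α : Type} {m l : ℕ} {φ : lang.BoundedFormula α l} :
    (SigmaFm m l φ → ∀ {γ : Type} [Primcodable γ] (v : γ → α → ℕ) (xs : γ → Fin l → ℕ),
      (∀ a, Primrec (fun c => v c a)) → (∀ i, Primrec (fun c => xs c i)) →
      SS m γ (fun c => RealN φ (v c) (xs c))) ∧
    (PiFm m l φ → ∀ {γ : Type} [Primcodable γ] (v : γ → α → ℕ) (xs : γ → Fin l → ℕ),
      (∀ a, Primrec (fun c => v c a)) → (∀ i, Primrec (fun c => xs c i)) →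
      SS m γ (fun c => ¬ RealN φ (v c) (xs c))) := by
  constructor
  · intro h
    refine SigmaFm.rec
      (motive_1 := fun m l φ _ => ∀ {γ : Type} [Primcodable γ] (v : γ → α → ℕ)
        (xs : γ → Fin l → ℕ),
        (∀ a, Primrec (fun c => v c a)) → (∀ i, Primrec (fun c => xs c i)) →
        SS m γ (fun c => RealN φ (v c) (xs c)))
      (motive_2 := fun m l φ _ => ∀ {γ : Type} [Primcodable γ] (v : γ → α → ℕ)
        (xs : γ → Fin l → ℕ),
        (∀ a, Primrec (fun c => v c a)) → (∀ i, Primrec (fun c => xs c i)) →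
        SS m γ (fun c => ¬ RealN φ (v c) (xs c))) ?_ ?_ ?_ ?_ ?_ ?_ h
    · intro m l φ h γ _ v xs hv hx
      exact SS.prim (h.prim v xs hv hx)
    · intro m l φ _ ih γ _ v xs hv hx
      exact (ih v xs hv hx).not_succ.of_eq fun c => not_not
    · intro m l φ _ ih γ _ v xs hv hx
      have h2 := ih (γ := γ × ℕ) (fun p => v p.1) (fun p => Fin.snoc (xs p.1) p.2)
        (fun a => (hv a).comp Primrec.fst) (prim_snoc hx)
      exact h2.ex.of_eq fun c => (realN_ex φ (v c) (xs c)).symm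
    · intro m l φ h γ _ v xs hv hx
      exact SS.prim (h.prim v xs hv hx).not
    · intro m l φ _ ih γ _ v xs hv hx
      exact (ih v xs hv hx).not_succ
    · intro m l φ _ ih γ _ v xs hv hx
      have h2 := ih (γ := γ × ℕ) (fun p => v p.1) (fun p => Fin.snoc (xs p.1) p.2)
        (fun a => (hv a).comp Primrec.fst) (prim_snoc hx)
      exact h2.ex.of_eq fun c => by rw [realN_all]; push Not; rfl
  · intro h
    refine PiFm.rec
      (motive_1 := fun m l φ _ => ∀ {γ : Type} [Primcodable γ] (v : γ → α → ℕ)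
        (xs : γ → Fin l → ℕ),
        (∀ a, Primrec (fun c => v c a)) → (∀ i, Primrec (fun c => xs c i)) →
        SS m γ (fun c => RealN φ (v c) (xs c)))
      (motive_2 := fun m l φ _ => ∀ {γ : Type} [Primcodable γ] (v : γ → α → ℕ)
        (xs : γ → Fin l → ℕ),
        (∀ a, Primrec (fun c => v c a)) → (∀ i, Primrec (fun c => xs c i)) →
        SS m γ (fun c => ¬ RealN φ (v c) (xs c))) ?_ ?_ ?_ ?_ ?_ ?_ h
    · intro m l φ h γ _ v xs hv hx
      exact SS.prim (h.prim v xs hv hx)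
    · intro m l φ _ ih γ _ v xs hv hx
      exact (ih v xs hv hx).not_succ.of_eq fun c => not_not
    · intro m l φ _ ih γ _ v xs hv hx
      have h2 := ih (γ := γ × ℕ) (fun p => v p.1) (fun p => Fin.snoc (xs p.1) p.2)
        (fun a => (hv a).comp Primrec.fst) (prim_snoc hx)
      exact h2.ex.of_eq fun c => (realN_ex φ (v c) (xs c)).symm
    · intro m l φ h γ _ v xs hv hx
      exact SS.prim (h.prim v xs hv hx).not
    · intro m l φ _ ih γ _ v xs hv hx
      exact (ih v xs hv hx).not_succ
    · intro m l φ _ ih γ _ v xs hv hx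
      have h2 := ih (γ := γ × ℕ) (fun p => v p.1) (fun p => Fin.snoc (xs p.1) p.2)
        (fun a => (hv a).comp Primrec.fst) (prim_snoc hx)
      exact h2.ex.of_eq fun c => by rw [realN_all]; push Not; rfl

end ArithFC
open FirstOrder Language

namespace ArithFC

/-- Functions whose graph is in the class. -/
def DF (n : ℕ) {γ : Type} [Primcodable γ] (f : γ → ℕ) : Prop :=
  SS (n + 1) (γ × ℕ) (fun p => f p.1 = p.2)

section DFsec
variable {n : ℕ} {γ δ : Type} [Primcodable γ] [Primcodable δ]

theorem DF.prim {f : γ → ℕ} (h : Primrec f) : DF n f :=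
  SS.prim (Primrec.eq.comp (h.comp Primrec.fst) Primrec.snd)

theorem DF.comp {f : γ → ℕ} (h : DF n f) {g : δ → γ} (hg : Primrec g) : DF n (fun x => f (g x)) :=
  SS.comp h (f := fun p : δ × ℕ => (g p.1, p.2)) (Primrec.pair (hg.comp Primrec.fst) Primrec.snd)

theorem DF.comp2 {f g : γ → ℕ} (hf : DF n f) (hg : DF n g) {F : ℕ → ℕ → ℕ} (hF : Primrec₂ F) :
    DF n (fun x => F (f x) (g x)) := by
  have h1 : SS (n + 1) ((γ × ℕ) × (ℕ × ℕ)) (fun p => f p.1.1 = p.2.1) :=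
    SS.comp hf (f := fun p : (γ × ℕ) × (ℕ × ℕ) => (p.1.1, p.2.1))
      (Primrec.pair (Primrec.fst.comp Primrec.fst) (Primrec.fst.comp Primrec.snd))
  have h2 : SS (n + 1) ((γ × ℕ) × (ℕ × ℕ)) (fun p => g p.1.1 = p.2.2) :=
    SS.comp hg (f := fun p : (γ × ℕ) × (ℕ × ℕ) => (p.1.1, p.2.2))
      (Primrec.pair (Primrec.fst.comp Primrec.fst) (Primrec.snd.comp Primrec.snd))
  have h3 : SS (n + 1) ((γ × ℕ) × (ℕ × ℕ)) (fun p => F p.2.1 p.2.2 = p.1.2) :=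
    SS.prim (Primrec.eq.comp (hF.comp (Primrec.fst.comp Primrec.snd)
      (Primrec.snd.comp Primrec.snd)) (Primrec.snd.comp Primrec.fst))
  refine (h1.and (h2.and h3)).exT.of_eq fun p => ?_
  constructor
  · rintro ⟨⟨a, b⟩, h1, h2, h3⟩
    simp only at h1 h2 h3
    show F (f p.1) (g p.1) = p.2
    rw [h1, h2, h3]
  · intro h
    exact ⟨(f p.1, g p.1), rfl, rfl, h⟩

theorem DF.subst_gen {α : Type} [Finite α] {l : ℕ} {P : (α → ℕ) → (Fin l → ℕ) → Prop}
    (hP : ∀ {γ : Type} [Primcodable γ] (v : γ → α → ℕ) (xs : γ → Fin l → ℕ),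
      (∀ a, Primrec (fun c => v c a)) → (∀ i, Primrec (fun c => xs c i)) →
      SS (n + 1) γ (fun c => P (v c) (xs c)))
    (v : γ → α → ℕ) (xs : γ → Fin l → ℕ)
    (hv : ∀ a, DF n (fun c => v c a)) (hx : ∀ i, DF n (fun c => xs c i)) :
    SS (n + 1) γ (fun c => P (v c) (xs c)) := by
  obtain ⟨p, ⟨e⟩⟩ := Finite.exists_equiv_fin α
  let B := (Fin p → ℕ) × (Fin l → ℕ)
  have h1 : SS (n + 1) (γ × B) (fun q => P (fun a => q.2.1 (e a)) q.2.2) :=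
    hP (γ := γ × B) (fun q a => q.2.1 (e a)) (fun q => q.2.2)
      (fun a => Primrec.fin_app.comp (Primrec.fst.comp Primrec.snd) (Primrec.const (e a)))
      (fun i => Primrec.fin_app.comp (Primrec.snd.comp Primrec.snd) (Primrec.const i))
  have h2 : SS (n + 1) (γ × B) (fun q => ∀ i, v q.1 (e.symm i) = q.2.1 i) :=
    SS.fin fun i => SS.comp (hv (e.symm i)) (f := fun q : γ × B => (q.1, q.2.1 i))
      (Primrec.pair Primrec.fst
        (Primrec.fin_app.comp (Primrec.fst.comp Primrec.snd) (Primrec.const i)))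
  have h3 : SS (n + 1) (γ × B) (fun q => ∀ i, xs q.1 i = q.2.2 i) :=
    SS.fin fun i => SS.comp (hx i) (f := fun q : γ × B => (q.1, q.2.2 i))
      (Primrec.pair Primrec.fst
        (Primrec.fin_app.comp (Primrec.snd.comp Primrec.snd) (Primrec.const i)))
  refine (h1.and (h2.and h3)).exT.of_eq fun c => ?_
  constructor
  · rintro ⟨⟨a, b⟩, h1, h2, h3⟩
    simp only at h1 h2 h3
    have e1 : (fun x => a (e x)) = v c := by
      funext x; rw [← h2 (e x)]; simp
    have e2 : b = xs c := by funext x; exact (h3 x).symm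
    rw [e1, e2] at h1
    exact h1
  · intro h
    refine ⟨(fun i => v c (e.symm i), xs c), ?_, fun i => rfl, fun i => rfl⟩
    simpa using h

/-- Least witness selection. -/
theorem DF.select {R : γ × ℕ → Prop} (h1 : SS (n + 1) (γ × ℕ) R)
    (h2 : SS (n + 1) (γ × ℕ) (fun p => ¬ R p))
    (h3 : SS (n + 1) γ (fun c => ¬ ∃ y, R (c, y))) :
    ∃ g : γ → ℕ, DF n g ∧ (∀ c, (∃ y, R (c, y)) → R (c, g c)) ∧
      ∀ c, ∀ y < g c, ¬ R (c, y) := by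
  classical
  let g : γ → ℕ := fun c => if h : ∃ y, R (c, y) then Nat.find h else 0
  refine ⟨g, ?_, ?_, ?_⟩
  · have h0 : SS (n + 1) (γ × ℕ) (fun p => p.2 = 0) :=
      SS.prim (Primrec.eq.comp Primrec.snd (Primrec.const 0))
    refine ((h1.and h2.ball).or ((h3.comp Primrec.fst).and h0)).of_eq ?_
    rintro ⟨c, y⟩
    simp only [g]
    split_ifs with h
    · rw [Nat.find_eq_iff]; tauto
    · constructor
      · rintro (⟨h', -⟩ | h')
        · exact (h ⟨_, h'⟩).elim
        · exact h'.2.symm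
      · intro h'
        exact Or.inr ⟨h, h'.symm⟩
  · intro c h
    simp only [g, dif_pos h]
    exact Nat.find_spec h
  · intro c y hy
    simp only [g] at hy
    split_ifs at hy with h
    · exact Nat.find_min h hy
    · exact absurd hy (Nat.not_lt_zero _)

end DFsec

/-- The ultrafilter. -/
noncomputable abbrev UF : Ultrafilter ℕ := Filter.hyperfilter ℕ

/-- The restricted ultrapower. -/
structure Mod (n : ℕ) : Type where
  g : Filter.Germ (UF : Filter ℕ) ℕ
  h : ∃ f : ℕ → ℕ, DF n f ∧ g = (f : Filter.Germ (UF : Filter ℕ) ℕ)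

section Model
variable {n : ℕ}

/-- The function `f` represents `x`. -/
def Rep (x : Mod n) (f : ℕ → ℕ) : Prop := DF n f ∧ x.g = (f : Filter.Germ (UF : Filter ℕ) ℕ)

theorem Mod.exists_rep (x : Mod n) : ∃ f, Rep x f := x.h

theorem exists_mod {f : ℕ → ℕ} (h : DF n f) : ∃ x : Mod n, Rep x f := ⟨⟨f, f, h, rfl⟩, h, rfl⟩

/-- A chosen representative. -/
noncomputable def Mod.rep (x : Mod n) : ℕ → ℕ := Classical.choose x.exists_rep
theorem Mod.rep_spec (x : Mod n) : Rep x x.rep := Classical.choose_spec x.exists_rep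

/-- The class of a function. -/
noncomputable def mkM (f : ℕ → ℕ) (h : DF n f) : Mod n := ⟨f, f, h, rfl⟩
theorem mkM_rep {f : ℕ → ℕ} (h : DF n f) : Rep (mkM f h) f := ⟨h, rfl⟩

theorem DF.add {f g : ℕ → ℕ} (hf : DF n f) (hg : DF n g) : DF n (fun i => f i + g i) :=
  hf.comp2 hg Primrec.nat_add
theorem DF.mul {f g : ℕ → ℕ} (hf : DF n f) (hg : DF n g) : DF n (fun i => f i * g i) :=
  hf.comp2 hg Primrec.nat_mul
theorem DF.sub {f g : ℕ → ℕ} (hf : DF n f) (hg : DF n g) : DF n (fun i => f i - g i) :=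
  hf.comp2 hg Primrec.nat_sub
theorem DF.const {γ : Type} [Primcodable γ] (c : ℕ) : DF n (fun _ : γ => c) :=
  DF.prim (Primrec.const c)

noncomputable instance modStr : lang.Structure (Mod n) where
  funMap := fun {k} (f : Func k) => match f with
    | Func.zero => fun _ => mkM (fun _ => 0) (DF.const 0)
    | Func.one => fun _ => mkM (fun _ => 1) (DF.const 1)
    | Func.add => fun v => mkM _ ((v 0).rep_spec.1.add (v 1).rep_spec.1)
    | Func.mul => fun v => mkM _ ((v 0).rep_spec.1.mul (v 1).rep_spec.1)
  RelMap := fun {k} (r : Rel k) => match r with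
    | Rel.lt => fun v => ∀ᶠ i in (UF : Filter ℕ), (v 0).rep i < (v 1).rep i

theorem Rep.eq_iff {x y : Mod n} {f g : ℕ → ℕ} (hx : Rep x f) (hy : Rep y g) :
    x = y ↔ ∀ᶠ i in (UF : Filter ℕ), f i = g i := by
  have : x = y ↔ x.g = y.g := by
    constructor
    · rintro rfl; rfl
    · intro h; cases x; cases y; simp only at h; subst h; rfl
  rw [this, hx.2, hy.2, Filter.Germ.coe_eq]
  rfl

theorem Rep.congr {x : Mod n} {f g : ℕ → ℕ} (hx : Rep x f) (hg : DF n g)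
    (h : ∀ᶠ i in (UF : Filter ℕ), f i = g i) : Rep x g :=
  ⟨hg, hx.2.trans (Filter.Germ.coe_eq.2 h)⟩

theorem Rep.ev {x : Mod n} {f g : ℕ → ℕ} (hx : Rep x f) (hg : Rep x g) :
    ∀ᶠ i in (UF : Filter ℕ), f i = g i := (hx.eq_iff hg).1 rfl

theorem Rep.lt_iff {x y : Mod n} {f g : ℕ → ℕ} (hx : Rep x f) (hy : Rep y g) :
    x < y ↔ ∀ᶠ i in (UF : Filter ℕ), f i < g i := by
  have h1 := x.rep_spec.ev hx
  have h2 := y.rep_spec.ev hy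
  show (∀ᶠ i in (UF : Filter ℕ), x.rep i < y.rep i) ↔ _
  refine Filter.eventually_congr ?_
  filter_upwards [h1, h2] with i a b
  rw [a, b]

theorem rep_zero : Rep (0 : Mod n) (fun _ => 0) := mkM_rep (DF.const 0)
theorem rep_one : Rep (1 : Mod n) (fun _ => 1) := mkM_rep (DF.const 1)
theorem Rep.add {x y : Mod n} {f g : ℕ → ℕ} (hx : Rep x f) (hy : Rep y g) :
    Rep (x + y) (fun i => f i + g i) := by
  have h1 := x.rep_spec.ev hx
  have h2 := y.rep_spec.ev hy
  refine (mkM_rep (x.rep_spec.1.add y.rep_spec.1)).congr (hx.1.add hy.1) ?_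
  filter_upwards [h1, h2] with i a b
  rw [a, b]
theorem Rep.mul {x y : Mod n} {f g : ℕ → ℕ} (hx : Rep x f) (hy : Rep y g) :
    Rep (x * y) (fun i => f i * g i) := by
  have h1 := x.rep_spec.ev hx
  have h2 := y.rep_spec.ev hy
  refine (mkM_rep (x.rep_spec.1.mul y.rep_spec.1)).congr (hx.1.mul hy.1) ?_
  filter_upwards [h1, h2] with i a b
  rw [a, b]

theorem mod_PAm (n : ℕ) : PAm (Mod n) where
  add_assoc x y z := by
    obtain ⟨f, hf⟩ := x.exists_rep; obtain ⟨g, hg⟩ := y.exists_rep; obtain ⟨h, hh⟩ := z.exists_rep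
    exact (((hf.add hg).add hh).eq_iff (hf.add (hg.add hh))).2 (.of_forall fun i => by ring)
  add_comm x y := by
    obtain ⟨f, hf⟩ := x.exists_rep; obtain ⟨g, hg⟩ := y.exists_rep
    exact ((hf.add hg).eq_iff (hg.add hf)).2 (.of_forall fun i => by ring)
  mul_assoc x y z := by
    obtain ⟨f, hf⟩ := x.exists_rep; obtain ⟨g, hg⟩ := y.exists_rep; obtain ⟨h, hh⟩ := z.exists_rep
    exact (((hf.mul hg).mul hh).eq_iff (hf.mul (hg.mul hh))).2 (.of_forall fun i => by ring)
  mul_comm x y := by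
    obtain ⟨f, hf⟩ := x.exists_rep; obtain ⟨g, hg⟩ := y.exists_rep
    exact ((hf.mul hg).eq_iff (hg.mul hf)).2 (.of_forall fun i => by ring)
  ldistrib x y z := by
    obtain ⟨f, hf⟩ := x.exists_rep; obtain ⟨g, hg⟩ := y.exists_rep; obtain ⟨h, hh⟩ := z.exists_rep
    exact ((hf.mul (hg.add hh)).eq_iff ((hf.mul hg).add (hf.mul hh))).2
      (.of_forall fun i => by ring)
  add_zero x := by
    obtain ⟨f, hf⟩ := x.exists_rep
    exact ((hf.add rep_zero).eq_iff hf).2 (.of_forall fun i => by ring)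
  mul_zero x := by
    obtain ⟨f, hf⟩ := x.exists_rep
    exact ((hf.mul rep_zero).eq_iff rep_zero).2 (.of_forall fun i => by ring)
  mul_one x := by
    obtain ⟨f, hf⟩ := x.exists_rep
    exact ((hf.mul rep_one).eq_iff hf).2 (.of_forall fun i => by ring)
  lt_trans x y z := by
    obtain ⟨f, hf⟩ := x.exists_rep; obtain ⟨g, hg⟩ := y.exists_rep; obtain ⟨h, hh⟩ := z.exists_rep
    rw [hf.lt_iff hg, hg.lt_iff hh, hf.lt_iff hh]
    intro h1 h2
    filter_upwards [h1, h2] with i a b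
    exact a.trans b
  lt_irrefl x := by
    obtain ⟨f, hf⟩ := x.exists_rep
    rw [hf.lt_iff hf]
    intro h1
    obtain ⟨i, hi⟩ := h1.exists
    exact lt_irrefl _ hi
  lt_total x y := by
    obtain ⟨f, hf⟩ := x.exists_rep; obtain ⟨g, hg⟩ := y.exists_rep
    rw [hf.lt_iff hg, hf.eq_iff hg, hg.lt_iff hf, ← Ultrafilter.eventually_or,
      ← Ultrafilter.eventually_or]
    exact .of_forall fun i => lt_trichotomy _ _
  add_lt_add x y z := by
    obtain ⟨f, hf⟩ := x.exists_rep; obtain ⟨g, hg⟩ := y.exists_rep; obtain ⟨h, hh⟩ := z.exists_rep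
    rw [hf.lt_iff hg, (hf.add hh).lt_iff (hg.add hh)]
    intro h1
    filter_upwards [h1] with i a
    omega
  mul_lt_mul x y z := by
    obtain ⟨f, hf⟩ := x.exists_rep; obtain ⟨g, hg⟩ := y.exists_rep; obtain ⟨h, hh⟩ := z.exists_rep
    rw [hf.lt_iff hg, rep_zero.lt_iff hh, (hf.mul hh).lt_iff (hg.mul hh)]
    intro h1 h2
    filter_upwards [h1, h2] with i a b
    exact Nat.mul_lt_mul_of_pos_right a b
  sub_exists x y := by
    obtain ⟨f, hf⟩ := x.exists_rep; obtain ⟨g, hg⟩ := y.exists_rep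
    rw [hf.lt_iff hg]
    intro h1
    obtain ⟨z, hz⟩ := exists_mod (hg.1.sub hf.1)
    refine ⟨z, ((hf.add hz).eq_iff hg).2 ?_⟩
    filter_upwards [h1] with i a
    omega
  zero_lt_one := (rep_zero.lt_iff rep_one).2 (.of_forall fun i => by norm_num)
  discrete x := by
    obtain ⟨f, hf⟩ := x.exists_rep
    show _ → (_ < _ ∨ _ = _)
    rw [rep_zero.lt_iff hf, rep_one.lt_iff hf, rep_one.eq_iff hf, ← Ultrafilter.eventually_or]
    intro h1
    filter_upwards [h1] with i a
    omega
  zero_le x := by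
    obtain ⟨f, hf⟩ := x.exists_rep
    show (_ < _ ∨ _ = _)
    rw [rep_zero.lt_iff hf, rep_zero.eq_iff hf, ← Ultrafilter.eventually_or]
    exact .of_forall fun i => by omega

end Model

end ArithFC
open FirstOrder Language

namespace ArithFC

section Los
variable {n : ℕ} {α : Type}

/-- The formula defines decidable relations along representable functions. -/
def Dec (n : ℕ) {α : Type} {l : ℕ} (φ : lang.BoundedFormula α l) : Prop :=
  ∀ {γ : Type} [Primcodable γ] (v : γ → α → ℕ) (xs : γ → Fin l → ℕ),
    (∀ a, DF n (fun c => v c a)) → (∀ i, DF n (fun c => xs c i)) →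
    SS (n + 1) γ (fun c => RealN φ (v c) (xs c)) ∧ SS (n + 1) γ (fun c => ¬ RealN φ (v c) (xs c))

theorem SigmaFm.dec [Finite α] {m l : ℕ} {φ : lang.BoundedFormula α l} (h : SigmaFm m l φ)
    (hm : m ≤ n) : Dec n φ := by
  intro γ _ v xs hv hx
  refine ⟨DF.subst_gen (P := fun v xs => RealN φ v xs) ?_ v xs hv hx,
    DF.subst_gen (P := fun v xs => ¬ RealN φ v xs) ?_ v xs hv hx⟩
  · intro γ _ v xs hv hx
    exact SS.mono (by omega) (sigmaPi_SS.1 h v xs hv hx)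
  · intro γ _ v xs hv hx
    exact SS.mono (by omega) (sigmaPi_SS.1 h v xs hv hx).not_succ

theorem PiFm.dec [Finite α] {m l : ℕ} {φ : lang.BoundedFormula α l} (h : PiFm m l φ)
    (hm : m ≤ n) : Dec n φ := by
  intro γ _ v xs hv hx
  refine ⟨DF.subst_gen (P := fun v xs => RealN φ v xs) ?_ v xs hv hx,
    DF.subst_gen (P := fun v xs => ¬ RealN φ v xs) ?_ v xs hv hx⟩
  · intro γ _ v xs hv hx
    exact SS.mono (by omega) ((sigmaPi_SS.2 h v xs hv hx).not_succ.of_eq fun c => not_not)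
  · intro γ _ v xs hv hx
    exact SS.mono (by omega) (sigmaPi_SS.2 h v xs hv hx)

theorem Dec.imp {l : ℕ} {φ ψ : lang.BoundedFormula α l} (h1 : Dec n φ) (h2 : Dec n ψ) :
    Dec n (φ.imp ψ) := by
  intro γ _ v xs hv hx
  have a := h1 v xs hv hx
  have b := h2 v xs hv hx
  exact ⟨(a.2.or b.1).of_eq fun c => by rw [realN_imp]; tauto,
    (a.1.and b.2).of_eq fun c => by rw [realN_imp]; tauto⟩

/-- The fundamental property of the restricted ultrapower for a formula. -/
def Los (n : ℕ) {α : Type} {l : ℕ} (φ : lang.BoundedFormula α l) : Prop :=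
  ∀ (V : α → Mod n) (X : Fin l → Mod n) (v : ℕ → α → ℕ) (xs : ℕ → Fin l → ℕ),
    (∀ a, Rep (V a) (fun c => v c a)) → (∀ i, Rep (X i) (fun c => xs c i)) →
    (φ.Realize V X ↔ ∀ᶠ i in (UF : Filter ℕ), RealN φ (v i) (xs i))

theorem rep_snoc {l : ℕ} {X : Fin l → Mod n} {xs : ℕ → Fin l → ℕ} {y : Mod n} {g : ℕ → ℕ}
    (hx : ∀ i, Rep (X i) (fun c => xs c i)) (hg : Rep y g) (i : Fin (l + 1)) :
    Rep ((Fin.snoc X y : Fin (l + 1) → Mod n) i)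
      (fun c => (Fin.snoc (xs c) (g c) : Fin (l + 1) → ℕ) i) := by
  refine Fin.lastCases ?_ (fun j => ?_) i
  · simpa using hg
  · simpa using hx j

theorem DF.snoc {γ : Type} [Primcodable γ] {l : ℕ} {xs : γ → Fin l → ℕ}
    (hx : ∀ i, DF n (fun c => xs c i)) (i : Fin (l + 1)) :
    DF n (fun p : γ × ℕ => (Fin.snoc (xs p.1) p.2 : Fin (l + 1) → ℕ) i) := by
  refine Fin.lastCases ?_ (fun j => ?_) i
  · simpa using DF.prim Primrec.snd
  · simpa using (hx j).comp Primrec.fst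

theorem rep_term {β : Type} (t : lang.Term β) {V : β → Mod n} {v : ℕ → β → ℕ}
    (hv : ∀ a, Rep (V a) (fun c => v c a)) : Rep (t.realize V) (fun c => termN t (v c)) := by
  induction t with
  | var i => exact hv i
  | func f ts ih =>
    cases f with
    | zero => exact rep_zero
    | one => exact rep_one
    | add => exact (ih 0).add (ih 1)
    | mul => exact (ih 0).mul (ih 1)

theorem rep_elim {l : ℕ} {V : α → Mod n} {X : Fin l → Mod n} {v : ℕ → α → ℕ} {xs : ℕ → Fin l → ℕ}
    (hv : ∀ a, Rep (V a) (fun c => v c a)) (hx : ∀ i, Rep (X i) (fun c => xs c i)) :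
    ∀ s, Rep (Sum.elim V X s) (fun c => (Sum.elim (v c) (xs c) : α ⊕ Fin l → ℕ) s)
  | Sum.inl a => hv a
  | Sum.inr i => hx i

theorem Los.falsum {l : ℕ} : Los n (BoundedFormula.falsum : lang.BoundedFormula α l) := by
  intro V X v xs hv hx
  constructor
  · intro h; exact h.elim
  · intro h
    obtain ⟨i, hi⟩ := h.exists
    exact hi.elim

theorem Los.imp {l : ℕ} {φ ψ : lang.BoundedFormula α l} (h1 : Los n φ) (h2 : Los n ψ) :
    Los n (φ.imp ψ) := by
  intro V X v xs hv hx
  rw [BoundedFormula.realize_imp, h1 V X v xs hv hx, h2 V X v xs hv hx,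
    ← Ultrafilter.eventually_imp]
  rfl

theorem Los.all {l : ℕ} {φ : lang.BoundedFormula α (l + 1)} (h1 : Los n φ) (h2 : Dec n φ)
    (h3 : Dec n φ.all) : Los n φ.all := by
  intro V X v xs hv hx
  rw [BoundedFormula.realize_all]
  constructor
  · intro h
    have a := h2 (γ := ℕ × ℕ) (fun p => v p.1) (fun p => Fin.snoc (xs p.1) p.2)
      (fun a => (hv a).1.comp Primrec.fst) (DF.snoc fun i => (hx i).1)
    have b := (h3 v xs (fun a => (hv a).1) (fun i => (hx i).1)).1
    obtain ⟨g, hg, hg1, -⟩ := DF.select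
      (R := fun p : ℕ × ℕ => ¬ RealN φ (v p.1) (Fin.snoc (xs p.1) p.2)) a.2
      (a.1.of_eq fun p => not_not.symm)
      (b.of_eq fun c => by rw [realN_all]; push Not; rfl)
    obtain ⟨y, hy⟩ := exists_mod hg
    have c := (h1 V (Fin.snoc X y) v (fun i => Fin.snoc (xs i) (g i)) hv (rep_snoc hx hy)).1 (h y)
    filter_upwards [c] with i hi
    rw [realN_all]
    by_contra hcon
    push Not at hcon
    exact hg1 i hcon hi
  · intro h y
    obtain ⟨g, hg⟩ := y.exists_rep
    refine (h1 V (Fin.snoc X y) v (fun i => Fin.snoc (xs i) (g i)) hv (rep_snoc hx hg)).2 ?_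
    filter_upwards [h] with i hi
    exact (realN_all φ _ _).1 hi _

theorem IsDelta0.los [Finite α] {l : ℕ} {φ : lang.BoundedFormula α l} (h : IsDelta0 l φ) :
    Los n φ := by
  induction h with
  | falsum l => exact Los.falsum
  | equal l t u =>
    intro V X v xs hv hx
    exact (rep_term t (rep_elim hv hx)).eq_iff (rep_term u (rep_elim hv hx))
  | rel l k R ts =>
    intro V X v xs hv hx
    cases R
    exact (rep_term (ts 0) (rep_elim hv hx)).lt_iff (rep_term (ts 1) (rep_elim hv hx))
  | imp l _ _ h1 h2 => exact h1.imp h2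
  | @bdAll l t φ hφ h1 =>
    refine Los.all (Los.imp ?_ h1) ?_ ?_
    · intro V X v xs hv hx
      exact (rep_term (Term.var (Sum.inr (Fin.last l))) (rep_elim hv hx)).lt_iff
        (rep_term (t.liftAt 1 l) (rep_elim hv hx))
    · exact (SigmaFm.delta0 0 _ ((IsDelta0.rel _ 2 _ _).imp _ hφ)).dec (Nat.zero_le _)
    · exact (SigmaFm.delta0 0 _ (IsDelta0.bdAll l t hφ)).dec (Nat.zero_le _)

theorem Los.ex {l : ℕ} {φ : lang.BoundedFormula α (l + 1)} (h1 : Los n φ) (h2 : Dec n φ)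
    (h3 : Dec n φ.ex) : Los n φ.ex := by
  have hf : ∀ l, Dec n (BoundedFormula.falsum : lang.BoundedFormula α l) := by
    intro l γ _ v xs hv hx
    exact ⟨SS.of_eq (P := fun _ : γ => (0 : ℕ) = 1)
        (SS.prim (Primrec.eq.comp (Primrec.const 0) (Primrec.const 1)))
        fun c => by simp [realN_falsum],
      SS.of_eq (P := fun _ : γ => (0 : ℕ) = 0)
        (SS.prim (Primrec.eq.comp (Primrec.const 0) (Primrec.const 0)))
        fun c => by simp [realN_falsum]⟩
  refine Los.imp (Los.all (h1.imp Los.falsum) (h2.imp (hf _)) ?_) Los.falsum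
  intro γ _ v xs hv hx
  have a := h3 v xs hv hx
  have e : ∀ c, RealN φ.ex (v c) (xs c) ↔ ¬ RealN (φ.imp BoundedFormula.falsum).all (v c) (xs c) :=
    fun c => Iff.rfl
  exact ⟨a.2.of_eq fun c => by rw [e, not_not]; rfl, a.1.of_eq fun c => e c⟩

theorem SigmaFm.los [Finite α] {m l : ℕ} {φ : lang.BoundedFormula α l} (h : SigmaFm m l φ)
    (hm : m ≤ n) : Los n φ := by
  refine SigmaFm.rec (motive_1 := fun m l φ _ => m ≤ n → Los n φ)
    (motive_2 := fun m l φ _ => m ≤ n → Los n φ) ?_ ?_ ?_ ?_ ?_ ?_ h hm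
  · intro m l φ h _; exact h.los
  · intro m l φ _ ih hm; exact ih (by omega)
  · intro m l φ h ih hm; exact (ih hm).ex (h.dec hm) ((SigmaFm.ex _ _ h).dec hm)
  · intro m l φ h _; exact h.los
  · intro m l φ _ ih hm; exact ih (by omega)
  · intro m l φ h ih hm; exact (ih hm).all (h.dec hm) ((PiFm.all _ _ h).dec hm)

theorem PiFm.los [Finite α] {m l : ℕ} {φ : lang.BoundedFormula α l} (h : PiFm m l φ)
    (hm : m ≤ n) : Los n φ := by
  refine PiFm.rec (motive_1 := fun m l φ _ => m ≤ n → Los n φ)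
    (motive_2 := fun m l φ _ => m ≤ n → Los n φ) ?_ ?_ ?_ ?_ ?_ ?_ h hm
  · intro m l φ h _; exact h.los
  · intro m l φ _ ih hm; exact ih (by omega)
  · intro m l φ h ih hm; exact (ih hm).ex (h.dec hm) ((SigmaFm.ex _ _ h).dec hm)
  · intro m l φ h _; exact h.los
  · intro m l φ _ ih hm; exact ih (by omega)
  · intro m l φ h ih hm; exact (ih hm).all (h.dec hm) ((PiFm.all _ _ h).dec hm)

theorem cofinite_UF (c : ℕ) : ∀ᶠ i in (UF : Filter ℕ), c ≤ i := by
  have h : ∀ᶠ i in Filter.cofinite, c ≤ i := by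
    rw [Nat.cofinite_eq_atTop]; exact Filter.eventually_ge_atTop c
  exact Filter.hyperfilter_le_cofinite h

/-- Half of the fundamental property at the next level, in both directions. -/
theorem SigmaFm.updown [Finite α] {l : ℕ} {φ : lang.BoundedFormula α l}
    (h : SigmaFm (n + 1) l φ) :
    ∀ (V : α → Mod n) (X : Fin l → Mod n) (v : ℕ → α → ℕ) (xs : ℕ → Fin l → ℕ),
    (∀ a, Rep (V a) (fun c => v c a)) → (∀ i, Rep (X i) (fun c => xs c i)) →
    (φ.Realize V X → ∀ᶠ i in (UF : Filter ℕ), RealN φ (v i) (xs i)) ∧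
    ∀ c, (∀ i, c ≤ i → RealN φ (v i) (xs i)) → φ.Realize V X := by
  have los_case : ∀ {l : ℕ} {φ : lang.BoundedFormula α l}, Los n φ →
    ∀ (V : α → Mod n) (X : Fin l → Mod n) (v : ℕ → α → ℕ) (xs : ℕ → Fin l → ℕ),
    (∀ a, Rep (V a) (fun c => v c a)) → (∀ i, Rep (X i) (fun c => xs c i)) →
    (φ.Realize V X → ∀ᶠ i in (UF : Filter ℕ), RealN φ (v i) (xs i)) ∧
    ∀ c, (∀ i, c ≤ i → RealN φ (v i) (xs i)) → φ.Realize V X := by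
    intro l φ h V X v xs hv hx
    refine ⟨(h V X v xs hv hx).1, fun c hc => (h V X v xs hv hx).2 ?_⟩
    filter_upwards [cofinite_UF c] with i hi
    exact hc i hi
  refine SigmaFm.rec (motive_1 := fun m l φ _ => m = n + 1 →
    ∀ (V : α → Mod n) (X : Fin l → Mod n) (v : ℕ → α → ℕ) (xs : ℕ → Fin l → ℕ),
    (∀ a, Rep (V a) (fun c => v c a)) → (∀ i, Rep (X i) (fun c => xs c i)) →
    (φ.Realize V X → ∀ᶠ i in (UF : Filter ℕ), RealN φ (v i) (xs i)) ∧
    ∀ c, (∀ i, c ≤ i → RealN φ (v i) (xs i)) → φ.Realize V X)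
    (motive_2 := fun m l φ _ => True) ?_ ?_ ?_ ?_ ?_ ?_ h rfl
  · intro m l φ h _; exact los_case h.los
  · intro m l φ h _ hm; exact los_case (h.los (by omega))
  · intro m l φ h ih hm V X v xs hv hx
    refine ⟨fun hr => ?_, fun c hc => ?_⟩
    · rw [BoundedFormula.realize_ex] at hr
      obtain ⟨y, hy⟩ := hr
      obtain ⟨g, hg⟩ := y.exists_rep
      have := (ih hm V (Fin.snoc X y) v (fun i => Fin.snoc (xs i) (g i)) hv (rep_snoc hx hg)).1 hy
      filter_upwards [this] with i hi
      exact (realN_ex _ _ _).2 ⟨_, hi⟩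
    · have a := DF.subst_gen (n := n) (P := fun v xs => RealN φ v xs)
        (fun v xs hv hx => SS.mono (by omega) (sigmaPi_SS.1 h v xs hv hx))
        (γ := ℕ × ℕ) (fun p => v p.1) (fun p => Fin.snoc (xs p.1) p.2)
        (fun a => (hv a).1.comp Primrec.fst) (DF.snoc fun i => (hx i).1)
      have b : SS (n + 1) (ℕ × ℕ) (fun p => p.1 < c) :=
        SS.prim (Primrec.nat_lt.comp Primrec.fst (Primrec.const c))
      obtain ⟨R, hR, hR1, hR2, hR3⟩ := (a.or b).unif
      have tot : ∀ i, ∃ y, R (i, y) := by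
        intro i
        by_cases hi : c ≤ i
        · obtain ⟨y, hy⟩ := (realN_ex _ _ _).1 (hc i hi)
          exact hR3 i y (Or.inl hy)
        · exact hR3 i 0 (Or.inr (by simpa using hi))
      choose g hg using tot
      have hgD : DF n g := hR.of_eq fun p =>
        ⟨fun h => hR2 p.1 _ _ (hg p.1) h, fun h => by have := hg p.1; rwa [h] at this⟩
      obtain ⟨y, hy⟩ := exists_mod hgD
      rw [BoundedFormula.realize_ex]
      refine ⟨y, (ih hm V (Fin.snoc X y) v (fun i => Fin.snoc (xs i) (g i)) hv
        (rep_snoc hx hy)).2 c fun i hi => ?_⟩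
      rcases hR1 _ (hg i) with h | h
      · exact h
      · exact absurd h (by simpa using hi)
  · intros; trivial
  · intros; trivial
  · intros; trivial

end Los

theorem mod_ISig (n : ℕ) : ISig n (Mod n) := by
  rintro A ⟨p, φ, w, hφ, hA⟩ h0 hs x
  by_contra hx
  obtain ⟨f, hf⟩ := x.exists_rep
  let wf : ℕ → Fin p → ℕ := fun i j => (w j).rep i
  have hL : ∀ y g, Rep y g → (y ∈ A ↔ ∀ᶠ i in (UF : Filter ℕ),
      RealN φ (Sum.elim (fun _ => g i) (wf i)) finZeroElim) := by
    intro y g hg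
    rw [show y ∈ A ↔ _ from hA (fun _ => y)]
    refine (hφ.los le_rfl) _ _ (fun i => Sum.elim (fun _ => g i) (wf i)) (fun _ => finZeroElim)
      ?_ (fun i => i.elim0)
    rintro (a | j)
    · exact hg
    · exact (w j).rep_spec
  have hdec : Dec n φ := hφ.dec le_rfl
  have hd := hdec (γ := ℕ × ℕ) (fun q => Sum.elim (fun _ => q.2) (wf q.1))
    (fun _ => finZeroElim) (by
      rintro (a | j)
      · exact DF.prim Primrec.snd
      · exact (w j).rep_spec.1.comp Primrec.fst) (fun i => i.elim0)
  have h1 : SS (n + 1) (ℕ × ℕ) (fun q => f q.1 = q.2) := hf.1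
  have h2 : SS (n + 1) (ℕ × ℕ) (fun q => ¬ f q.1 = q.2) := by
    have a : SS (n + 1) ((ℕ × ℕ) × ℕ) (fun q => f q.1.1 = q.2) :=
      SS.comp h1 (f := fun q : (ℕ × ℕ) × ℕ => (q.1.1, q.2))
        (Primrec.pair (Primrec.fst.comp Primrec.fst) Primrec.snd)
    have b : SS (n + 1) ((ℕ × ℕ) × ℕ) (fun q => ¬ q.2 = q.1.2) :=
      SS.prim (PrimrecPred.not (Primrec.eq.comp Primrec.snd (Primrec.snd.comp Primrec.fst)))
    refine (a.and b).ex.of_eq fun q => ?_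
    simp
  obtain ⟨g, hg, hg1, hg2⟩ := DF.select
    (R := fun q : ℕ × ℕ => f q.1 = q.2 ∨
      ¬ RealN φ (Sum.elim (fun _ => q.2) (wf q.1)) finZeroElim)
    (h1.or hd.2) ((h2.and hd.1).of_eq fun q => by tauto)
    (SS.of_eq (P := fun _ : ℕ => (0 : ℕ) = 1)
        (SS.prim (Primrec.eq.comp (Primrec.const 0) (Primrec.const 1)))
        fun c => by
          simp only [zero_ne_one, false_iff, not_not]
          exact ⟨f c, Or.inl rfl⟩)
  have hg1' := fun c => hg1 c ⟨f c, Or.inl rfl⟩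
  obtain ⟨y, hy⟩ := exists_mod hg
  rw [hL x f hf, ← Ultrafilter.eventually_not] at hx
  have hg3 : ∀ᶠ i in (UF : Filter ℕ),
      ¬ RealN φ (Sum.elim (fun _ => g i) (wf i)) finZeroElim := by
    filter_upwards [hx] with i hi
    rcases hg1' i with h | h
    · simp only at h; rw [← h]; exact hi
    · exact h
  have h0' := (hL 0 _ rep_zero).1 h0
  obtain ⟨z, hz⟩ := exists_mod (hg.sub (DF.const 1))
  have hzA : z ∈ A := by
    rw [hL z _ hz]
    filter_upwards [hg3, h0'] with i hi hi0
    have hne : g i ≠ 0 := by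
      intro h; rw [h] at hi; exact hi hi0
    by_contra hcon
    exact hg2 i (g i - 1) (by omega) (Or.inr hcon)
  have hyA := hs z hzA
  have hyz : z + 1 = y := by
    rw [(hz.add rep_one).eq_iff hy]
    filter_upwards [hg3, h0'] with i hi hi0
    have hne : g i ≠ 0 := by
      intro h; rw [h] at hi; exact hi hi0
    omega
  rw [hyz, hL y g hy] at hyA
  obtain ⟨i, hi, hi'⟩ := (hyA.and hg3).exists
  exact hi' hi

end ArithFC
open FirstOrder Language

namespace ArithFC

theorem mod_inj (n : ℕ) : ∃ a : Mod n, SigmaInjWhole (Mod n) (n + 1) a := by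
  obtain ⟨U, hU, hU1⟩ := SS.univ n
  have hG : SS (n + 1) ((ℕ × ℕ) × ℕ) (fun p => U (p.1.2, Nat.pair p.1.1 p.2)) :=
    hU.comp (f := fun p : (ℕ × ℕ) × ℕ => (p.1.2, Nat.pair p.1.1 p.2))
      (Primrec.pair (Primrec.snd.comp Primrec.fst)
        (Primrec₂.natPair.comp (Primrec.fst.comp Primrec.fst) Primrec.snd))
  obtain ⟨H1, hH1, hH1s, hH1f, hH1e⟩ := hG.unif
  have hH2 : SS (n + 1) ((ℕ × ℕ) × ℕ) (fun p => p.2 < p.1.1 ∧ H1 ((p.1.1, p.2), p.1.2)) :=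
    (SS.prim (Primrec.nat_lt.comp Primrec.snd (Primrec.fst.comp Primrec.fst))).and
      (hH1.comp (f := fun p : (ℕ × ℕ) × ℕ => ((p.1.1, p.2), p.1.2))
        (Primrec.pair (Primrec.pair (Primrec.fst.comp Primrec.fst) Primrec.snd)
          (Primrec.snd.comp Primrec.fst)))
  obtain ⟨H3, hH3, hH3s, hH3f, hH3e⟩ := hH2.unif
  have happ : ∀ i : Fin 3, Primrec (fun v : Fin 3 → ℕ => v i) := fun i =>
    Primrec.fin_app.comp Primrec.id (Primrec.const i)
  have hP : SS (n + 1) (Fin 3 → ℕ) (fun v => H3 ((v 0, v 1), v 2)) :=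
    hH3.comp (f := fun v : Fin 3 → ℕ => ((v 0, v 1), v 2))
      (Primrec.pair (Primrec.pair (happ 0) (happ 1)) (happ 2))
  obtain ⟨⟨φ, hφ, hφr⟩, -⟩ := hP.toFm (α := Fin 2 ⊕ Fin 1) (l := 0)
    ![Sum.inl (Sum.inr 0), Sum.inl (Sum.inl 0), Sum.inl (Sum.inl 1)]
  obtain ⟨a, ha⟩ := exists_mod (n := n) (DF.prim (Primrec.id (α := ℕ)))
  have hr : ∀ i x e : ℕ, RealN φ (Sum.elim ![x, e] (fun _ => i)) finZeroElim ↔ H3 ((i, x), e) := by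
    intro i x e
    rw [hφr]
    rfl
  have hud : ∀ (x e : Mod n) (f g : ℕ → ℕ), Rep x f → Rep e g →
      (φ.Realize (Sum.elim ![x, e] (fun _ => a)) finZeroElim →
        ∀ᶠ i in (UF : Filter ℕ), H3 ((i, f i), g i)) ∧
      ∀ c, (∀ i, c ≤ i → H3 ((i, f i), g i)) →
        φ.Realize (Sum.elim ![x, e] (fun _ => a)) finZeroElim := by
    intro x e f g hf hg
    have := hφ.updown (Sum.elim ![x, e] (fun _ => a)) finZeroElim
      (fun i => Sum.elim ![f i, g i] (fun _ => i)) (fun _ => finZeroElim) (by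
        rintro (j | j)
        · fin_cases j
          · exact hf
          · exact hg
        · exact ha) (fun i => i.elim0)
    simpa only [hr] using this
  refine ⟨a, fun x e => φ.Realize (Sum.elim ![x, e] (fun _ => a)) finZeroElim,
    ⟨1, φ, fun _ => a, hφ, fun v => ?_⟩, ?_, ?_, ?_⟩
  · have : ![v 0, v 1] = v := by
      funext j; fin_cases j <;> rfl
    beta_reduce
    rw [this]
  · intro x
    obtain ⟨f, hf⟩ := x.exists_rep
    have hfP : SS (n + 1) ℕ (fun k => f k.unpair.1 = k.unpair.2) :=
      SS.comp hf.1 Primrec.unpair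
    obtain ⟨e0, he0⟩ := hU1 _ hfP
    have hex : ∀ i, e0 + 1 ≤ i → ∃ y, H3 ((i, f i), y) := by
      intro i hi
      have h1 : ∀ x, U (e0, Nat.pair i x) ↔ f i = x := by
        intro x; rw [← he0]; simp
      obtain ⟨y, hy⟩ := hH1e (i, e0) (f i) ((h1 _).2 rfl)
      have := (h1 y).1 (hH1s _ hy)
      subst this
      exact hH3e (i, f i) e0 ⟨hi, hy⟩
    have hS : SS (n + 1) (ℕ × ℕ) (fun p => H3 ((p.1, f p.1), p.2)) := by
      have a1 : SS (n + 1) ((ℕ × ℕ) × ℕ) (fun p => f p.1.1 = p.2) :=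
        SS.comp hf.1 (f := fun p : (ℕ × ℕ) × ℕ => (p.1.1, p.2))
          (Primrec.pair (Primrec.fst.comp Primrec.fst) Primrec.snd)
      have a2 : SS (n + 1) ((ℕ × ℕ) × ℕ) (fun p => H3 ((p.1.1, p.2), p.1.2)) :=
        hH3.comp (f := fun p : (ℕ × ℕ) × ℕ => ((p.1.1, p.2), p.1.2))
        (Primrec.pair (Primrec.pair (Primrec.fst.comp Primrec.fst) Primrec.snd)
          (Primrec.snd.comp Primrec.fst))
      exact (a1.and a2).ex.of_eq fun p => by simp
    have hb : SS (n + 1) (ℕ × ℕ) (fun p => p.1 < e0 + 1) :=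
      SS.prim (Primrec.nat_lt.comp Primrec.fst (Primrec.const (e0 + 1)))
    obtain ⟨R, hR, hR1, hR2, hR3⟩ := (hS.or hb).unif
    have tot : ∀ i, ∃ y, R (i, y) := by
      intro i
      by_cases hi : e0 + 1 ≤ i
      · obtain ⟨y, hy⟩ := hex i hi
        exact hR3 i y (Or.inl hy)
      · exact hR3 i 0 (Or.inr (Nat.lt_of_not_le hi))
    choose g hg using tot
    have hgD : DF n g := hR.of_eq fun p =>
      ⟨fun h => hR2 p.1 _ _ (hg p.1) h, fun h => by have := hg p.1; rwa [h] at this⟩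
    obtain ⟨y, hy⟩ := exists_mod hgD
    have hgH : ∀ i, e0 + 1 ≤ i → H3 ((i, f i), g i) := by
      intro i hi
      rcases hR1 _ (hg i) with h | h
      · exact h
      · exact absurd h (Nat.not_lt_of_le hi)
    refine ⟨y, ?_, (hud x y f g hf hy).2 _ hgH⟩
    rw [hy.lt_iff ha]
    filter_upwards [cofinite_UF (e0 + 1)] with i hi
    exact (hH3s _ (hgH i hi)).1
  · intro x e e' h h'
    obtain ⟨f, hf⟩ := x.exists_rep
    obtain ⟨g, hg⟩ := e.exists_rep
    obtain ⟨g', hg'⟩ := e'.exists_rep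
    rw [hg.eq_iff hg']
    filter_upwards [(hud x e f g hf hg).1 h, (hud x e' f g' hf hg').1 h'] with i h1 h2
    exact hH3f _ _ _ h1 h2
  · intro x x' e h h'
    obtain ⟨f, hf⟩ := x.exists_rep
    obtain ⟨f', hf'⟩ := x'.exists_rep
    obtain ⟨g, hg⟩ := e.exists_rep
    rw [hf.eq_iff hf']
    filter_upwards [(hud x e f g hf hg).1 h, (hud x' e f' g hf' hg).1 h'] with i h1 h2
    exact hH1f _ _ _ (hH3s _ h1).2 (hH3s _ h2).2

end ArithFC
namespace ArithFC

/-- For every `n ≥ 1`, PA⁻ + IΣn does not prove CARD(Σ_{n+1}):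
there is a model of PA⁻ + IΣn with a Σ_{n+1}-definable injection of the whole
model into `[0, a)` for some `a`. -/
theorem statement_1 (n : ℕ) (hn : 1 ≤ n) :
    ∃ (M : Type) (_ : lang.Structure M), PAm M ∧ ISig n M ∧
      ∃ a : M, SigmaInjWhole M (n + 1) a := by
  exact ⟨Mod n, modStr, mod_PAm n, mod_ISig n, mod_inj n⟩

end ArithFC
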